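/- Let B₁, B₂, …, B_d ∈ ℝ^{n×n} be linearly independent matrices with tr(B_i B_iᵀ) = n for each i, let M be a random n×n orthogonal matrix distributed according to the Haar measure on O(n), and let X = (tr(B₁M), tr(B₂M), …, tr(B_dM)) ∈ ℝ^d. Define A ∈ ℝ^{d×d} by A_{ij} = (1/n) tr(B_i B_jᵀ) and let Y ∼ N(0, A). Then for n ≥ 2, the 1st Wasserstein distance satisfies D_Wass(X, Y) ≤ d√(2‖A‖)/(n−1), where ‖A‖ is the operator norm of A; equivalently, for every 1-Lipschitz function g : ℝ^d → ℝ, |E[g(X)] − E[g(Y)]| ≤ d√(2‖A‖)/(n−1). -/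

import Mathlib

open MeasureTheory ProbabilityTheory Matrix Kronecker
open scoped ENNReal NNReal

noncomputable section

instance {m n : Type*} : MeasurableSpace (Matrix m n ℝ) :=
  show MeasurableSpace (m → n → ℝ) from inferInstance

/-- `μ` is the Haar probability measure on the group `O(n)` of `n × n` real orthogonal
matrices: it is a probability measure, it is supported on orthogonal matrices, and it is
invariant under (left) translation by any orthogonal matrix. -/
def IsHaarO (n : ℕ) (μ : Measure (Matrix (Fin n) (Fin n) ℝ)) : Prop :=
  IsProbabilityMeasure μ ∧
  (∀ᵐ M ∂μ, Mᵀ * M = 1) ∧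
  ∀ Q : Matrix (Fin n) (Fin n) ℝ, Qᵀ * Q = 1 → μ.map (fun M => Q * M) = μ

/-- `μ` is the Haar probability measure on `SO(n)`: a probability measure supported on
orthogonal matrices of determinant one, invariant under left translation by `SO(n)`. -/
def IsHaarSO (n : ℕ) (μ : Measure (Matrix (Fin n) (Fin n) ℝ)) : Prop :=
  IsProbabilityMeasure μ ∧
  (∀ᵐ M ∂μ, Mᵀ * M = 1 ∧ M.det = 1) ∧
  ∀ Q : Matrix (Fin n) (Fin n) ℝ, Qᵀ * Q = 1 → Q.det = 1 →
    μ.map (fun M => Q * M) = μ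

/-- The map taking an `n × n` matrix to `√(n/k)` times its top-left `m × k` submatrix. -/
def suoOfHaar {m k n : ℕ} (hm : m ≤ n) (hk : k ≤ n)
    (M : Matrix (Fin n) (Fin n) ℝ) : Matrix (Fin m) (Fin k) ℝ :=
  Real.sqrt ((n : ℝ) / (k : ℝ)) • M.submatrix (Fin.castLE hm) (Fin.castLE hk)

/-- `ν` is the scaled-corrected uniform orthogonal (SUO) distribution on `m × k` matrices:
the law of `√(n/k) • W₀` where `n = max k m` and `W₀` is the top-left `m × k` submatrix of
a Haar-distributed `n × n` orthogonal matrix. -/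
def IsSUO (m k : ℕ) (ν : Measure (Matrix (Fin m) (Fin k) ℝ)) : Prop :=
  ∃ μ : Measure (Matrix (Fin (max k m)) (Fin (max k m)) ℝ),
    IsHaarO (max k m) μ ∧
    ν = μ.map (suoOfHaar (le_max_right k m) (le_max_left k m))

/-- The kernel function `κ_f(z, z') = (1/m) f(z)ᵀ f(z')` of the combined layer
`f(z) = φ(W z)`, with `φ` applied elementwise. -/
def kernelF {m k : ℕ} (φ : ℝ → ℝ) (W : Matrix (Fin m) (Fin k) ℝ)
    (z z' : Fin k → ℝ) : ℝ :=
  (∑ i, φ (W.mulVec z i) * φ (W.mulVec z' i)) / (m : ℝ)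

/-- The input covariance matrix `Σ_{z,z'} = (1/k) [[zᵀz, zᵀz'], [z'ᵀz, z'ᵀz']]`. -/
def covMat {k : ℕ} (z z' : Fin k → ℝ) : Matrix (Fin 2) (Fin 2) ℝ :=
  (k : ℝ)⁻¹ • !![z ⬝ᵥ z, z ⬝ᵥ z'; z' ⬝ᵥ z, z' ⬝ᵥ z']

/-- The approximate kernel function `κ̃_f(Σ) = E_{u ∼ N(0, Σ)}[φ(u₁) φ(u₂)]`, realized by
pushing a pair of independent standard Gaussians through the Cholesky factor of `Σ`. -/
def approxKernel (φ : ℝ → ℝ) (S : Matrix (Fin 2) (Fin 2) ℝ) : ℝ :=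
  ∫ p : ℝ × ℝ,
      φ (Real.sqrt (S 0 0) * p.1) *
      φ ((S 1 0 / Real.sqrt (S 0 0)) * p.1 +
          Real.sqrt (S 1 1 - (S 1 0) ^ 2 / S 0 0) * p.2)
    ∂((gaussianReal 0 1).prod (gaussianReal 0 1))

/-- `γ` is the law of a centered (jointly) Gaussian random vector indexed by `ι` with
covariance matrix `A`: every linear functional of it is a centered real Gaussian with the
corresponding variance. -/
def IsGaussianLaw {ι : Type*} [Fintype ι] (A : Matrix ι ι ℝ)
    (γ : Measure (ι → ℝ)) : Prop :=
  IsProbabilityMeasure γ ∧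
  ∀ l : ι → ℝ,
    γ.map (fun y => ∑ i, l i * y i) =
      gaussianReal 0 (Real.toNNReal (∑ i, ∑ j, l i * A i j * l j))

/-- The Frobenius (Hilbert–Schmidt) norm of a matrix. -/
def frobNorm {m n : ℕ} (M : Matrix (Fin m) (Fin n) ℝ) : ℝ :=
  Real.sqrt (∑ i, ∑ j, (M i j) ^ 2)

/-- The `ℓ²` operator norm of a square matrix. -/
def opNorm {d : ℕ} (A : Matrix (Fin d) (Fin d) ℝ) : ℝ :=
  ‖Matrix.toEuclideanCLM (𝕜 := ℝ) A‖

end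

instance matBorel {m n : Type*} [Countable m] [Countable n] : BorelSpace (Matrix m n ℝ) :=
  inferInstanceAs (BorelSpace (m → n → ℝ))

section HaarPart

attribute [local instance] Matrix.linftyOpNormedRing Matrix.linftyOpNormedAlgebra

theorem orth_isCompact (n : ℕ) :
    IsCompact {M : Matrix (Fin n) (Fin n) ℝ | Mᵀ * M = 1} := by
  have h1 : IsCompact {M : Matrix (Fin n) (Fin n) ℝ | ∀ i, ∀ j, M i j ∈ Set.Icc (-1:ℝ) 1} := by
    have := isCompact_pi_infinite (X := fun _ : Fin n => Fin n → ℝ)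
      (s := fun _ => {v | ∀ j, v j ∈ Set.Icc (-1:ℝ) 1})
      (fun i => isCompact_pi_infinite (fun _ => isCompact_Icc))
    exact this
  refine h1.of_isClosed_subset ?_ ?_
  · exact isClosed_eq (by fun_prop) continuous_const
  · intro M hM i j
    have hU : M ∈ Matrix.unitaryGroup (Fin n) ℝ := by
      rw [Matrix.mem_unitaryGroup_iff']; simpa [Matrix.star_eq_conjTranspose] using hM
    have := entry_norm_bound_of_unitary hU i j
    rw [Real.norm_eq_abs, abs_le] at this
    exact this

theorem haar_bdd {n : ℕ} {f : Matrix (Fin n) (Fin n) ℝ → ℝ} (hf : Continuous f) :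
    ∃ K, ∀ M : Matrix (Fin n) (Fin n) ℝ, Mᵀ * M = 1 → ‖f M‖ ≤ K := by
  obtain ⟨K, hK⟩ := (orth_isCompact n).exists_bound_of_continuousOn hf.continuousOn
  exact ⟨K, fun M hM => hK M hM⟩

theorem haar_integrable {n : ℕ} {μ : Measure (Matrix (Fin n) (Fin n) ℝ)} (hμ : IsHaarO n μ)
    {f : Matrix (Fin n) (Fin n) ℝ → ℝ} (hf : Continuous f) : Integrable f μ := by
  have := hμ.1
  obtain ⟨K, hK⟩ := haar_bdd hf
  refine Integrable.of_bound hf.measurable.aestronglyMeasurable K ?_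
  filter_upwards [hμ.2.1] with M hM using hK M hM

theorem haar_inv {n : ℕ} {μ : Measure (Matrix (Fin n) (Fin n) ℝ)} (hμ : IsHaarO n μ)
    {f : Matrix (Fin n) (Fin n) ℝ → ℝ} (hf : Continuous f) (Q : Matrix (Fin n) (Fin n) ℝ)
    (hQ : Qᵀ * Q = 1) : ∫ M, f (Q * M) ∂μ = ∫ M, f M ∂μ := by
  have hc : Continuous fun M : Matrix (Fin n) (Fin n) ℝ => Q * M := by fun_prop
  conv_rhs => rw [← hμ.2.2 Q hQ]
  rw [integral_map hc.measurable.aemeasurable hf.measurable.aestronglyMeasurable]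

theorem exp_orth {n : ℕ} (J : Matrix (Fin n) (Fin n) ℝ) (hJ : Jᵀ = -J) (t : ℝ) :
    (NormedSpace.exp (t • J))ᵀ * NormedSpace.exp (t • J) = 1 := by
  rw [← Matrix.exp_transpose, transpose_smul, hJ, smul_neg,
    ← Matrix.exp_add_of_commute _ _ ((Commute.refl (t • J)).neg_left)]
  simp

theorem haar_deriv {n : ℕ} {μ : Measure (Matrix (Fin n) (Fin n) ℝ)} (hμ : IsHaarO n μ)
    {Φ : Matrix (Fin n) (Fin n) ℝ → ℝ} (hΦ : ContDiff ℝ 1 Φ) (J : Matrix (Fin n) (Fin n) ℝ)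
    (hJ : Jᵀ = -J) : ∫ M, fderiv ℝ Φ M (J * M) ∂μ = 0 := by
  have := hμ.1
  have hc : Continuous fun M => fderiv ℝ Φ M (J * M) :=
    (hΦ.continuous_fderiv one_ne_zero).clm_apply (by fun_prop)
  obtain ⟨K, hK⟩ := haar_bdd hc
  have key := hasDerivAt_integral_of_dominated_loc_of_deriv_le (μ := μ) (x₀ := (0:ℝ))
    (s := Set.univ) (F := fun t M => Φ (NormedSpace.exp (t • J) * M))
    (F' := fun t M => fderiv ℝ Φ (NormedSpace.exp (t • J) * M)
      (J * (NormedSpace.exp (t • J) * M))) (bound := fun _ => K) Filter.univ_mem ?_ ?_ ?_ ?_ ?_ ?_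
  · have h2 := key.2
    have h3 : (fun t : ℝ => ∫ M, Φ (NormedSpace.exp (t • J) * M) ∂μ) = fun _ => ∫ M, Φ M ∂μ := by
      funext t
      exact haar_inv hμ hΦ.continuous _ (exp_orth J hJ t)
    rw [h3] at h2
    have := h2.unique (hasDerivAt_const _ _)
    simpa using this
  · refine Filter.Eventually.of_forall fun t => ?_
    have : Continuous fun M : Matrix (Fin n) (Fin n) ℝ => Φ (NormedSpace.exp (t • J) * M) :=
      hΦ.continuous.comp (by fun_prop)
    exact this.measurable.aestronglyMeasurable
  · exact haar_integrable hμ (hΦ.continuous.comp (by fun_prop))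
  · simpa using hc.measurable.aestronglyMeasurable
  · filter_upwards [hμ.2.1] with M hM t _
    apply hK
    have := exp_orth J hJ t
    rw [transpose_mul, Matrix.mul_assoc, ← Matrix.mul_assoc _ _ M, this, Matrix.one_mul, hM]
  · exact integrable_const _
  · refine Filter.Eventually.of_forall fun M t _ => ?_
    have h1 : HasDerivAt (fun u : ℝ => NormedSpace.exp (u • J) * M)
        (J * (NormedSpace.exp (t • J) * M)) t := by
      have := (hasDerivAt_exp_smul_const' (𝕂 := ℝ) J t).mul_const M
      rwa [Matrix.mul_assoc] at this
    exact ((hΦ.differentiable one_ne_zero _).hasFDerivAt).comp_hasDerivAt t h1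

/-- elementary skew matrix -/
def skewE {n : ℕ} (p q : Fin n) : Matrix (Fin n) (Fin n) ℝ :=
  Matrix.single p q 1 - Matrix.single q p 1

theorem sum_single_smul {n : ℕ} (f : Fin n → Fin n → ℝ) :
    ∑ p : Fin n, ∑ q : Fin n, f p q • Matrix.single p q (1:ℝ) = Matrix.of f := by
  conv_rhs => rw [Matrix.matrix_eq_sum_single (Matrix.of f)]
  simp [Matrix.smul_single]

theorem skewE_trace_sum {n : ℕ} (K : Matrix (Fin n) (Fin n) ℝ) :
    ∑ p : Fin n, ∑ q : Fin n, (K * skewE p q).trace • skewE p q = (2:ℝ) • (Kᵀ - K) := by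
  have : ∀ p q, (K * skewE p q).trace = K q p - K p q := by
    intro p q
    simp [skewE, Matrix.mul_sub, Matrix.trace_mul_single]
  simp_rw [this, skewE, smul_sub, Finset.sum_sub_distrib]
  rw [sum_single_smul, Finset.sum_comm, sum_single_smul (fun p q => K p q - K q p)]
  ext a b
  simp
  ring

theorem skewE_sq_sum {n : ℕ} : ∑ p : Fin n, ∑ q : Fin n, skewE p q * skewE p q
    = -(2 * ((n:ℝ) - 1)) • (1 : Matrix (Fin n) (Fin n) ℝ) := by
  have h : ∀ p q : Fin n, skewE p q * skewE p q = (if p = q then (2:ℝ) else 0) • Matrix.single p q (1:ℝ)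
      - Matrix.single p p 1 - Matrix.single q q 1 := by
    intro p q
    by_cases hpq : p = q
    · subst hpq
      simp [skewE, two_smul]
    · simp [skewE, sub_mul, mul_sub, hpq, Ne.symm hpq, Matrix.single_mul_single_of_ne]
      abel
  simp_rw [h, Finset.sum_sub_distrib]
  rw [sum_single_smul, Finset.sum_comm (f := fun p q => Matrix.single p p (1:ℝ))]
  have h1 : ∑ p : Fin n, Matrix.single p p (1:ℝ) = 1 := by
    rw [← Matrix.diagonal_one, ← Matrix.sum_single_eq_diagonal]
  simp only [h1, Finset.sum_const, Finset.card_univ, Fintype.card_fin, ← Nat.cast_smul_eq_nsmul ℝ]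
  ext a b
  by_cases hab : a = b
  · subst hab; simp; ring
  · simp [hab]

theorem skewE_transpose {n : ℕ} (p q : Fin n) : (skewE p q)ᵀ = -skewE p q := by
  simp [skewE]

/-- Schwinger-Dyson equation. -/
theorem haar_SD {n : ℕ} {μ : Measure (Matrix (Fin n) (Fin n) ℝ)} (hμ : IsHaarO n μ)
    {h : Matrix (Fin n) (Fin n) ℝ → ℝ} (hh : ContDiff ℝ 1 h) (C : Matrix (Fin n) (Fin n) ℝ) :
    ((n:ℝ) - 1) * ∫ M, (C * M).trace * h M ∂μ = ∫ M, fderiv ℝ h M (Cᵀ - M * C * M) ∂μ := by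
  have hcd : Continuous fun M => fderiv ℝ h M := hh.continuous_fderiv one_ne_zero
  have hdiff : Differentiable ℝ h := hh.differentiable one_ne_zero
  have hhc := hh.continuous
  -- each J
  have step : ∀ p q : Fin n, ∫ M, ((C * (skewE p q * skewE p q) * M).trace * h M +
      fderiv ℝ h M (((M * C) * skewE p q).trace • (skewE p q * M))) ∂μ = 0 := by
    intro p q
    set J := skewE p q with hJ
    have hlin : ∀ D : Matrix (Fin n) (Fin n) ℝ, ∃ ℓ : Matrix (Fin n) (Fin n) ℝ →L[ℝ] ℝ,
        ∀ M, ℓ M = (D * M).trace := fun D =>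
      ⟨LinearMap.toContinuousLinearMap
        ((Matrix.traceLinearMap (Fin n) ℝ ℝ).comp (LinearMap.mulLeft ℝ D)), fun M => rfl⟩
    obtain ⟨ℓ, hℓ⟩ := hlin (C * J)
    have hΦ : ContDiff ℝ 1 (fun M => ℓ M * h M) := ℓ.contDiff.mul hh
    have := haar_deriv hμ hΦ J (skewE_transpose p q)
    rw [← this]
    refine integral_congr_ae (Filter.Eventually.of_forall fun M => ?_)
    have hd : HasFDerivAt (fun M => ℓ M * h M) (ℓ M • fderiv ℝ h M + h M • ℓ) M :=
      ℓ.hasFDerivAt.mul (hdiff M).hasFDerivAt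
    simp only [hd.fderiv]
    simp only [_root_.add_apply, _root_.smul_apply,
      smul_eq_mul, hℓ, map_smul]
    have e1 : C * (J * J) * M = C * J * (J * M) := by simp only [Matrix.mul_assoc]
    have e2 : (M * C * J).trace = (C * J * M).trace := by
      rw [Matrix.mul_assoc, Matrix.trace_mul_comm]
    rw [e1, e2]; ring
  have hint1 : ∀ D : Matrix (Fin n) (Fin n) ℝ, Integrable (fun M => (D * M).trace * h M) μ :=
    fun D => haar_integrable hμ (by fun_prop)
  have hint2 : ∀ p q : Fin n, Integrable (fun M =>
      fderiv ℝ h M (((M * C) * skewE p q).trace • (skewE p q * M))) μ :=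
    fun p q => haar_integrable hμ (hcd.clm_apply (by fun_prop))
  have tot : ∑ p : Fin n, ∑ q : Fin n, ∫ M, ((C * (skewE p q * skewE p q) * M).trace * h M +
      fderiv ℝ h M (((M * C) * skewE p q).trace • (skewE p q * M))) ∂μ = 0 := by
    simp only [step, Finset.sum_const_zero]
  simp_rw [fun p q => integral_add (hint1 (C * (skewE p q * skewE p q))) (hint2 p q),
    Finset.sum_add_distrib] at tot
  simp_rw [← integral_finsetSum Finset.univ (fun q _ => hint1 (C * (skewE _ q * skewE _ q))),
    ← integral_finsetSum Finset.univ (fun q _ => hint2 _ q)] at tot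
  rw [← integral_finsetSum _ (fun p _ => integrable_finsetSum _ fun q _ =>
      hint1 (C * (skewE p q * skewE p q))),
    ← integral_finsetSum _ (fun p _ => integrable_finsetSum _ fun q _ => hint2 p q)] at tot
  have t1 : ∀ M : Matrix (Fin n) (Fin n) ℝ, ∑ p : Fin n, ∑ q : Fin n,
      (C * (skewE p q * skewE p q) * M).trace * h M
      = -(2 * ((n:ℝ) - 1)) * ((C * M).trace * h M) := by
    intro M
    simp_rw [← Finset.sum_mul, ← Matrix.trace_sum, ← Finset.sum_mul, ← Finset.mul_sum]
    rw [skewE_sq_sum]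
    simp
    ring
  have t2 : ∀ M : Matrix (Fin n) (Fin n) ℝ, Mᵀ * M = 1 → ∑ p : Fin n, ∑ q : Fin n,
      fderiv ℝ h M (((M * C) * skewE p q).trace • (skewE p q * M))
      = 2 * fderiv ℝ h M (Cᵀ - M * C * M) := by
    intro M hM
    simp_rw [← map_sum, ← smul_mul_assoc, ← Finset.sum_mul]
    rw [skewE_trace_sum, smul_mul_assoc, map_smul, smul_eq_mul, sub_mul, transpose_mul,
      Matrix.mul_assoc, hM, Matrix.mul_one]
  simp_rw [t1] at tot
  rw [integral_const_mul, integral_congr_ae (f := fun M => ∑ p : Fin n, ∑ q : Fin n,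
      fderiv ℝ h M (((M * C) * skewE p q).trace • (skewE p q * M))) (g := fun M => 2 * fderiv ℝ h M (Cᵀ - M * C * M))
    (by filter_upwards [hμ.2.1] with M hM using t2 M hM), integral_const_mul] at tot
  linarith

end HaarPart

section MomentPart

attribute [local instance] Matrix.linftyOpNormedRing Matrix.linftyOpNormedAlgebra

/-- entry as a continuous linear map -/
noncomputable def entryL {n : ℕ} (i j : Fin n) : Matrix (Fin n) (Fin n) ℝ →L[ℝ] ℝ :=
  LinearMap.toContinuousLinearMap (Matrix.entryLinearMap ℝ ℝ i j)

theorem entryL_apply {n : ℕ} (i j : Fin n) (M : Matrix (Fin n) (Fin n) ℝ) :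
    entryL i j M = M i j := rfl

/-- indicator -/
def kd {n : ℕ} (i j : Fin n) : ℝ := if i = j then 1 else 0

theorem haar_SD_entry {n : ℕ} {μ : Measure (Matrix (Fin n) (Fin n) ℝ)} (hμ : IsHaarO n μ)
    {h : Matrix (Fin n) (Fin n) ℝ → ℝ} (hh : ContDiff ℝ 1 h) (a b : Fin n) :
    ((n:ℝ) - 1) * ∫ M, M a b * h M ∂μ =
      ∫ M, fderiv ℝ h M (Matrix.of fun c e => kd a c * kd b e - M c b * M a e) ∂μ := by
  have := haar_SD hμ hh (Matrix.single b a 1)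
  simp only [Matrix.trace_single_mul] at this
  simp only [smul_eq_mul, one_mul] at this
  rw [this]
  congr 1; ext M; congr 1; ext c e
  simp only [Matrix.sub_apply, Matrix.transpose_single, Matrix.of_apply, Matrix.single_apply, kd]
  congr 1
  · split_ifs <;> simp_all
  · simp [Matrix.mul_apply, Matrix.single_apply, ite_and]

theorem haar_row_flip {n : ℕ} {μ : Measure (Matrix (Fin n) (Fin n) ℝ)} (hμ : IsHaarO n μ)
    {h : Matrix (Fin n) (Fin n) ℝ → ℝ} (hh : Continuous h) (a : Fin n)
    (hodd : ∀ M, h (Matrix.of fun c e => (if c = a then -1 else 1) * M c e) = - h M) :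
    ∫ M, h M ∂μ = 0 := by
  have hQ : (Matrix.diagonal fun c : Fin n => if c = a then (-1:ℝ) else 1)ᵀ *
      (Matrix.diagonal fun c : Fin n => if c = a then (-1:ℝ) else 1) = 1 := by
    rw [Matrix.diagonal_transpose, Matrix.diagonal_mul_diagonal, ← Matrix.diagonal_one]
    congr 1; ext c; split_ifs <;> simp
  have := haar_inv hμ hh _ hQ
  have e : ∀ M : Matrix (Fin n) (Fin n) ℝ, h ((Matrix.diagonal fun c : Fin n => if c = a then (-1:ℝ) else 1) * M) = - h M := by
    intro M; rw [← hodd]; congr 1; ext c e; simp [Matrix.diagonal_mul]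
  simp_rw [e, integral_neg] at this
  linarith

theorem haar_row_perm {n : ℕ} {μ : Measure (Matrix (Fin n) (Fin n) ℝ)} (hμ : IsHaarO n μ)
    {h : Matrix (Fin n) (Fin n) ℝ → ℝ} (hh : Continuous h) (σ : Equiv.Perm (Fin n)) :
    ∫ M, h (Matrix.of fun c e => M (σ c) e) ∂μ = ∫ M, h M ∂μ := by
  have hQ : (σ.permMatrix ℝ)ᵀ * (σ.permMatrix ℝ) = 1 := by
    rw [Matrix.transpose_permMatrix, ← Matrix.permMatrix_mul]; simp
  rw [← haar_inv hμ hh _ hQ]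
  congr 1; ext M; congr 1; ext c e
  simp [Equiv.Perm.permMatrix, PEquiv.toMatrix_toPEquiv_mul]

theorem haar_m2 {n : ℕ} {μ : Measure (Matrix (Fin n) (Fin n) ℝ)} (hμ : IsHaarO n μ) (hn : 2 ≤ n)
    (a b c e : Fin n) : ∫ M, M a b * M c e ∂μ = kd a c * kd b e / n := by
  have := hμ.1
  have hn' : (2:ℝ) ≤ n := by exact_mod_cast hn
  by_cases h : a = c
  · subst h
    have h1 := haar_SD_entry hμ (h := fun M => entryL a e M) (entryL a e).contDiff a b
    have hd : ∀ M : Matrix (Fin n) (Fin n) ℝ, fderiv ℝ (fun M => entryL a e M) M = entryL a e :=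
      fun M => (entryL a e).hasFDerivAt.fderiv
    simp_rw [hd] at h1
    simp only [entryL_apply, Matrix.of_apply] at h1
    rw [integral_sub (integrable_const _) (haar_integrable hμ (by fun_prop))] at h1
    simp only [integral_const, probReal_univ, one_smul] at h1
    simp only [kd, if_true] at h1 ⊢
    field_simp
    linarith
  · rw [haar_row_flip hμ (by fun_prop) a]
    · simp [kd, h]
    · intro M; simp [Ne.symm h]

/-- fourth moments -/
noncomputable def T4 {n : ℕ} (μ : Measure (Matrix (Fin n) (Fin n) ℝ)) (i j k l a b c e : Fin n) : ℝ :=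
  ∫ M, M a i * M b j * M c k * M e l ∂μ

theorem T4_SD {n : ℕ} {μ : Measure (Matrix (Fin n) (Fin n) ℝ)} (hμ : IsHaarO n μ) (hn : 2 ≤ n)
    (i j k l a b c e : Fin n) :
    ((n:ℝ) - 1) * T4 μ i j k l a b c e + T4 μ i j k l b a c e + T4 μ i j k l c b a e
      + T4 μ i j k l e b c a
    = (kd a b * kd i j * (kd c e * kd k l) + kd a c * kd i k * (kd b e * kd j l)
      + kd a e * kd i l * (kd b c * kd j k)) / n := by
  have hd : ∀ M : Matrix (Fin n) (Fin n) ℝ,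
      HasFDerivAt (fun M => entryL b j M * entryL c k M * entryL e l M)
      ((entryL b j M * entryL c k M) • entryL e l + entryL e l M •
        (entryL b j M • entryL c k + entryL c k M • entryL b j)) M := by
    intro M
    exact ((entryL b j).hasFDerivAt.mul (entryL c k).hasFDerivAt).mul (entryL e l).hasFDerivAt
  have hc : ContDiff ℝ 1 (fun M => entryL b j M * entryL c k M * entryL e l M) :=
    ((entryL b j).contDiff.mul (entryL c k).contDiff).mul (entryL e l).contDiff
  have h1 := haar_SD_entry hμ hc a i
  simp_rw [fun M => (hd M).fderiv] at h1
  simp only [_root_.add_apply, _root_.smul_apply, smul_eq_mul, entryL_apply, Matrix.of_apply] at h1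
  have e1 : ∫ M, M a i * (M b j * M c k * M e l) ∂μ = T4 μ i j k l a b c e := by
    unfold T4; congr 1; ext M; ring
  rw [e1] at h1
  have e2 : ∫ M, M b j * M c k * (kd a e * kd i l - M e i * M a l) + M e l *
      (M b j * (kd a c * kd i k - M c i * M a k) + M c k * (kd a b * kd i j - M b i * M a j)) ∂μ
      = (kd a b * kd i j * ∫ M, M c k * M e l ∂μ) + (kd a c * kd i k * ∫ M, M b j * M e l ∂μ)
      + (kd a e * kd i l * ∫ M, M b j * M c k ∂μ) - T4 μ i j k l b a c e - T4 μ i j k l c b a e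
      - T4 μ i j k l e b c a := by
    unfold T4
    simp only [← integral_const_mul]
    rw [← integral_add, ← integral_add, ← integral_sub, ← integral_sub, ← integral_sub]
    · congr 1; ext M; ring
    all_goals exact haar_integrable hμ (by fun_prop)
  rw [e2] at h1
  simp only [haar_m2 hμ hn] at h1
  rw [add_assoc, add_assoc, h1]; ring

theorem T4_zero {n : ℕ} {μ : Measure (Matrix (Fin n) (Fin n) ℝ)} (hμ : IsHaarO n μ)
    (i j k l a b c e : Fin n) (r : Fin n)
    (hr : (if a = r then (-1:ℝ) else 1) * (if b = r then (-1:ℝ) else 1) *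
      (if c = r then (-1:ℝ) else 1) * (if e = r then (-1:ℝ) else 1) = -1) :
    T4 μ i j k l a b c e = 0 := by
  unfold T4
  refine haar_row_flip hμ (by fun_prop) r fun M => ?_
  simp only [Matrix.of_apply]
  linear_combination (M a i * M b j * M c k * M e l) * hr

theorem T4_swap {n : ℕ} {μ : Measure (Matrix (Fin n) (Fin n) ℝ)} (hμ : IsHaarO n μ)
    (i j k l a b c e : Fin n) (σ : Equiv.Perm (Fin n)) :
    T4 μ i j k l (σ a) (σ b) (σ c) (σ e) = T4 μ i j k l a b c e := by
  unfold T4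
  exact haar_row_perm hμ (h := fun M => M a i * M b j * M c k * M e l) (by fun_prop) σ

theorem T4_formula {n : ℕ} {μ : Measure (Matrix (Fin n) (Fin n) ℝ)} (hμ : IsHaarO n μ) (hn : 2 ≤ n)
    (i j k l a b c e : Fin n) :
    (n:ℝ) * (n - 1) * (n + 2) * T4 μ i j k l a b c e =
      (n + 2) * (kd a b * kd c e * (kd i j * kd k l) + kd a c * kd b e * (kd i k * kd j l)
        + kd a e * kd b c * (kd i l * kd j k))
      - (kd a b * kd c e + kd a c * kd b e + kd a e * kd b c) *
        (kd i j * kd k l + kd i k * kd j l + kd i l * kd j k) := by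
  have hn' : (2:ℝ) ≤ n := by exact_mod_cast hn
  have hn0 : (n:ℝ) ≠ 0 := by linarith
  have clear : ∀ x y : ℝ, x = y / n → n * x = y := by
    intro x y h; rw [h]; field_simp
  -- two-pair case
  have two : ∀ a c : Fin n, a ≠ c →
      (n:ℝ) * (n - 1) * (n + 2) * T4 μ i j k l a a c c =
        (n+2) * (kd i j * kd k l) - (kd i j * kd k l + kd i k * kd j l + kd i l * kd j k) ∧
      (n:ℝ) * (n - 1) * (n + 2) * T4 μ i j k l a c a c =
        (n+2) * (kd i k * kd j l) - (kd i j * kd k l + kd i k * kd j l + kd i l * kd j k) ∧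
      (n:ℝ) * (n - 1) * (n + 2) * T4 μ i j k l a c c a =
        (n+2) * (kd i l * kd j k) - (kd i j * kd k l + kd i k * kd j l + kd i l * kd j k) := by
    intro a c hac
    have s1 := T4_swap hμ i j k l a a c c (Equiv.swap a c)
    have s2 := T4_swap hμ i j k l a c a c (Equiv.swap a c)
    have s3 := T4_swap hμ i j k l a c c a (Equiv.swap a c)
    simp only [Equiv.swap_apply_left, Equiv.swap_apply_right] at s1 s2 s3
    have q1 := clear _ _ (T4_SD hμ hn i j k l a a c c)
    have q2 := clear _ _ (T4_SD hμ hn i j k l a c a c)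
    have q3 := clear _ _ (T4_SD hμ hn i j k l a c c a)
    rw [s1, s2, s3] at *
    simp only [kd, hac, Ne.symm hac, if_true, if_false] at q1 q2 q3
    simp only [kd]
    refine ⟨?_, ?_, ?_⟩
    · linear_combination ((n:ℝ)+1) * q1 - q2 - q3
    · linear_combination ((n:ℝ)+1) * q2 - q1 - q3
    · linear_combination ((n:ℝ)+1) * q3 - q2 - q1
  have four : (n:ℝ) * (n - 1) * (n + 2) * T4 μ i j k l a a a a =
        (n-1) * (kd i j * kd k l + kd i k * kd j l + kd i l * kd j k) := by
    have q1 := clear _ _ (T4_SD hμ hn i j k l a a a a)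
    simp only [kd, if_true] at q1
    simp only [kd]
    linear_combination ((n:ℝ)-1) * q1
  by_cases hab : a = b
  · subst hab
    by_cases hce : c = e
    · subst hce
      by_cases hac : a = c
      · subst hac
        rw [four]; simp only [kd, if_true]; ring
      · rw [(two a c hac).1]; simp only [kd, if_true, hac, if_false]; ring
    · by_cases hac : a = c
      · subst hac
        rw [T4_zero hμ i j k l _ _ _ _ e (by simp [hce])]
        simp [kd, hce]
      · rw [T4_zero hμ i j k l _ _ _ _ c (by simp [hac, Ne.symm hce])]
        simp [kd, hce, hac]
  · by_cases hac : a = c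
    · subst hac
      by_cases hbe : b = e
      · subst hbe
        rw [(two a b hab).2.1]; simp only [kd, if_true, hab, Ne.symm hab, if_false]; ring
      · rw [T4_zero hμ i j k l _ _ _ _ b (by simp [hab, Ne.symm hbe])]
        simp [kd, hab, hbe, Ne.symm hab]
    · by_cases hae : a = e
      · subst hae
        by_cases hbc : b = c
        · subst hbc
          rw [(two a b hab).2.2]; simp only [kd, if_true, hab, Ne.symm hab, if_false]; ring
        · rw [T4_zero hμ i j k l _ _ _ _ b (by simp [hab, Ne.symm hbc])]
          simp [kd, hab, hac, hbc]
      · rw [T4_zero hμ i j k l _ _ _ _ a (by simp [Ne.symm hab, Ne.symm hac, Ne.symm hae])]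
        simp [kd, hab, hac, hae]

end MomentPart

section VarPart

theorem kd_sum {n : ℕ} (a : Fin n) (f : Fin n → ℝ) : ∑ b, kd a b * f b = f a := by
  simp [kd]

theorem sum_rot3 {n : ℕ} (g : Fin n → Fin n → Fin n → ℝ) :
    ∑ k, ∑ l, ∑ c, g k l c = ∑ c, ∑ k, ∑ l, g k l c := by
  rw [Finset.sum_comm (f := fun c k => ∑ l, g k l c)]
  exact Finset.sum_congr rfl fun k _ => Finset.sum_comm

theorem haar_int4 {n : ℕ} {μ : Measure (Matrix (Fin n) (Fin n) ℝ)} (hμ : IsHaarO n μ)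
    (f : Fin n → Fin n → Fin n → Fin n → Matrix (Fin n) (Fin n) ℝ → ℝ)
    (hf : ∀ a b c e, Continuous (f a b c e)) :
    ∫ M, ∑ a, ∑ b, ∑ c, ∑ e, f a b c e M ∂μ = ∑ a, ∑ b, ∑ c, ∑ e, ∫ M, f a b c e M ∂μ := by
  rw [integral_finsetSum _ (fun a _ => haar_integrable hμ (by fun_prop))]
  refine Finset.sum_congr rfl fun a _ => ?_
  rw [integral_finsetSum _ (fun a _ => haar_integrable hμ (by fun_prop))]
  refine Finset.sum_congr rfl fun b _ => ?_
  rw [integral_finsetSum _ (fun a _ => haar_integrable hμ (by fun_prop))]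
  refine Finset.sum_congr rfl fun c _ => ?_
  rw [integral_finsetSum _ (fun a _ => haar_integrable hμ (by fun_prop))]

theorem S4_1 {n : ℕ} (G : Fin n → Fin n → Fin n → Fin n → ℝ) :
    ∑ a, ∑ b, ∑ c, ∑ e, kd a b * kd c e * G a b c e = ∑ a, ∑ c, G a a c c := by
  simp only [mul_assoc, ← Finset.mul_sum]
  simp only [kd_sum]

theorem S4_2 {n : ℕ} (G : Fin n → Fin n → Fin n → Fin n → ℝ) :
    ∑ a, ∑ b, ∑ c, ∑ e, kd a c * kd b e * G a b c e = ∑ a, ∑ b, G a b a b := by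
  simp only [mul_assoc, ← Finset.mul_sum]
  simp only [kd_sum]

theorem S4_3 {n : ℕ} (G : Fin n → Fin n → Fin n → Fin n → ℝ) :
    ∑ a, ∑ b, ∑ c, ∑ e, kd a e * kd b c * G a b c e = ∑ a, ∑ b, G a b b a := by
  have : ∀ a b c e : Fin n, kd a e * kd b c * G a b c e = kd b c * (kd a e * G a b c e) := by
    intros; ring
  simp only [this]
  simp only [← Finset.mul_sum]
  simp only [kd_sum]

theorem S4_add {n : ℕ} (G H : Fin n → Fin n → Fin n → Fin n → ℝ) :
    ∑ a, ∑ b, ∑ c, ∑ e, (G a b c e + H a b c e) =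
    ∑ a, ∑ b, ∑ c, ∑ e, G a b c e + ∑ a, ∑ b, ∑ c, ∑ e, H a b c e := by
  simp only [Finset.sum_add_distrib]

theorem S4_mul {n : ℕ} (r : ℝ) (G : Fin n → Fin n → Fin n → Fin n → ℝ) :
    ∑ a, ∑ b, ∑ c, ∑ e, (r * G a b c e) = r * ∑ a, ∑ b, ∑ c, ∑ e, G a b c e := by
  simp only [Finset.mul_sum]

/-- column contraction -/
theorem S4_col {n : ℕ} (N P1 P2 P3 : ℝ) (w : Fin n → Fin n → Fin n → Fin n → ℝ) :
    ∑ i, ∑ j, ∑ k, ∑ l, w i j k l * (N * (P1 * (kd i j * kd k l) + P2 * (kd i k * kd j l)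
        + P3 * (kd i l * kd j k)) - (P1 + P2 + P3) *
        (kd i j * kd k l + kd i k * kd j l + kd i l * kd j k)) =
    (N * P1 - (P1 + P2 + P3)) * ∑ i, ∑ k, w i i k k +
    (N * P2 - (P1 + P2 + P3)) * ∑ i, ∑ j, w i j i j +
    (N * P3 - (P1 + P2 + P3)) * ∑ i, ∑ j, w i j j i := by
  rw [← S4_1 w, ← S4_2 w, ← S4_3 w, ← S4_mul, ← S4_mul, ← S4_mul, ← S4_add, ← S4_add]
  refine Finset.sum_congr rfl fun i _ => Finset.sum_congr rfl fun j _ =>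
    Finset.sum_congr rfl fun k _ => Finset.sum_congr rfl fun l _ => ?_
  ring

theorem S4_row {n : ℕ} (N : ℝ) (w1 w2 w3 : Fin n → Fin n → Fin n → Fin n → ℝ) :
    ∑ a, ∑ b, ∑ c, ∑ e, 
    ((N * (kd a b * kd c e) - (kd a b * kd c e + kd a c * kd b e + kd a e * kd b c)) * w1 a b c e +
    (N * (kd a c * kd b e) - (kd a b * kd c e + kd a c * kd b e + kd a e * kd b c)) * w2 a b c e +
    (N * (kd a e * kd b c) - (kd a b * kd c e + kd a c * kd b e + kd a e * kd b c)) * w3 a b c e)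
    = (N - 1) * (∑ a, ∑ c, w1 a a c c + ∑ a, ∑ c, w2 a c a c + ∑ a, ∑ c, w3 a c c a)
    - (∑ a, ∑ c, w1 a c a c + ∑ a, ∑ c, w1 a c c a + ∑ a, ∑ c, w2 a a c c + ∑ a, ∑ c, w2 a c c a
    + ∑ a, ∑ c, w3 a a c c + ∑ a, ∑ c, w3 a c a c) := by
  rw [← S4_1 w1, ← S4_1 w2, ← S4_1 w3, ← S4_2 w1, ← S4_2 w2, ← S4_2 w3, ← S4_3 w1, ← S4_3 w2,
    ← S4_3 w3]
  simp only [← S4_add, ← S4_mul, ← Finset.sum_sub_distrib]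
  refine Finset.sum_congr rfl fun i _ => Finset.sum_congr rfl fun j _ =>
    Finset.sum_congr rfl fun k _ => Finset.sum_congr rfl fun l _ => ?_
  ring

theorem F_expand {n : ℕ} (C D M : Matrix (Fin n) (Fin n) ℝ) :
    (D * (M * C * M)).trace = ∑ a, ∑ b, ∑ k, ∑ l, C k b * D l a * (M a k * M b l) := by
  simp only [Matrix.trace, Matrix.diag, Matrix.mul_apply, Finset.mul_sum, Finset.sum_mul]
  -- ∑ l, ∑ a, ∑ b, ∑ k
  rw [Finset.sum_comm]
  refine Finset.sum_congr rfl fun a _ => ?_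
  rw [Finset.sum_comm]
  refine Finset.sum_congr rfl fun b _ => ?_
  rw [Finset.sum_comm]
  refine Finset.sum_congr rfl fun k _ => Finset.sum_congr rfl fun l _ => ?_
  ring

theorem F_sq_expand {n : ℕ} (C D M : Matrix (Fin n) (Fin n) ℝ) :
    (D * (M * C * M)).trace ^ 2 = ∑ a, ∑ b, ∑ c, ∑ e, ∑ k, ∑ l, ∑ p, ∑ q,
      (C k b * D l a * C p e * D q c) * (M a k * M b l * M c p * M e q) := by
  rw [sq, F_expand]
  simp only [Finset.sum_mul]
  refine Finset.sum_congr rfl fun a _ => Finset.sum_congr rfl fun b _ => ?_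
  simp only [Finset.mul_sum]
  have : ∀ f : Fin n → Fin n → Fin n → Fin n → Fin n → Fin n → ℝ,
      ∑ k, ∑ l, ∑ c, ∑ e, ∑ p, ∑ q, f k l c e p q = ∑ c, ∑ e, ∑ k, ∑ l, ∑ p, ∑ q, f k l c e p q := by
    intro f
    rw [sum_rot3]
    refine Finset.sum_congr rfl fun c _ => ?_
    rw [sum_rot3]
  rw [this]
  refine Finset.sum_congr rfl fun c _ => Finset.sum_congr rfl fun e _ =>
    Finset.sum_congr rfl fun k _ => Finset.sum_congr rfl fun l _ =>
    Finset.sum_congr rfl fun p _ => Finset.sum_congr rfl fun q _ => ?_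
  ring

theorem F_mean {n : ℕ} {μ : Measure (Matrix (Fin n) (Fin n) ℝ)} (hμ : IsHaarO n μ) (hn : 2 ≤ n)
    (C D : Matrix (Fin n) (Fin n) ℝ) :
    ∫ M, (D * (M * C * M)).trace ∂μ = (∑ k, ∑ a, C k a * D k a) / n := by
  simp_rw [F_expand]
  rw [haar_int4 hμ _ (by intros; fun_prop)]
  simp_rw [integral_const_mul, haar_m2 hμ hn]
  have : ∀ a b k l : Fin n, C k b * D l a * (kd a b * kd k l / n) =
    kd a b * (kd k l * (C k b * D l a / n)) := by intros; ring
  simp only [this]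
  simp only [← Finset.mul_sum]
  simp only [kd_sum]
  rw [Finset.sum_comm]
  simp only [Finset.sum_div]

theorem F_sq_int {n : ℕ} {μ : Measure (Matrix (Fin n) (Fin n) ℝ)} (hμ : IsHaarO n μ) 
    (C D : Matrix (Fin n) (Fin n) ℝ) :
    ∫ M, (D * (M * C * M)).trace ^ 2 ∂μ = ∑ a, ∑ b, ∑ c, ∑ e, ∑ k, ∑ l, ∑ p, ∑ q,
      (C k b * D l a * C p e * D q c) * T4 μ k l p q a b c e := by
  simp_rw [F_sq_expand]
  rw [haar_int4 hμ _ (by intros; fun_prop)]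
  refine Finset.sum_congr rfl fun a _ => Finset.sum_congr rfl fun b _ =>
    Finset.sum_congr rfl fun c _ => Finset.sum_congr rfl fun e _ => ?_
  rw [haar_int4 hμ _ (by intros; fun_prop)]
  simp_rw [integral_const_mul]
  rfl

/-- the exact second moment -/
theorem F_sq_formula {n : ℕ} {μ : Measure (Matrix (Fin n) (Fin n) ℝ)} (hμ : IsHaarO n μ)
    (hn : 2 ≤ n) (C D : Matrix (Fin n) (Fin n) ℝ) :
    (n:ℝ) * (n - 1) * (n + 2) * ∫ M, (D * (M * C * M)).trace ^ 2 ∂μ =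
    (n + 1) * (2 * (∑ k, ∑ a, C k a * D k a) ^ 2 + (∑ k, ∑ a, C k a ^ 2) * (∑ k, ∑ a, D k a ^ 2))
    - (2 * ∑ k, ∑ l, (C * Dᵀ) k l ^ 2 + ∑ k, ∑ l, (C * Dᵀ) k l * (C * Dᵀ) l k
      + 2 * ∑ k, ∑ l, (Cᵀ * D) k l ^ 2 + ∑ k, ∑ l, (Cᵀ * D) k l * (Cᵀ * D) l k) := by
  rw [F_sq_int hμ, ← S4_mul]
  have h1 : ∀ a b c e : Fin n, (n:ℝ) * (n - 1) * (n + 2) * (∑ k, ∑ l, ∑ p, ∑ q,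
      (C k b * D l a * C p e * D q c) * T4 μ k l p q a b c e) =
      (((n:ℝ) + 2) * (kd a b * kd c e) - (kd a b * kd c e + kd a c * kd b e + kd a e * kd b c)) *
        (∑ i, ∑ k, C i b * D i a * C k e * D k c) +
      (((n:ℝ) + 2) * (kd a c * kd b e) - (kd a b * kd c e + kd a c * kd b e + kd a e * kd b c)) *
        (∑ i, ∑ j, C i b * D j a * C i e * D j c) +
      (((n:ℝ) + 2) * (kd a e * kd b c) - (kd a b * kd c e + kd a c * kd b e + kd a e * kd b c)) *
        (∑ i, ∑ j, C i b * D j a * C j e * D i c) := by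
    intro a b c e
    rw [← S4_mul, ← S4_col ((n:ℝ) + 2) (kd a b * kd c e) (kd a c * kd b e) (kd a e * kd b c)
      (fun k l p q => C k b * D l a * C p e * D q c)]
    refine Finset.sum_congr rfl fun k _ => Finset.sum_congr rfl fun l _ =>
      Finset.sum_congr rfl fun p _ => Finset.sum_congr rfl fun q _ => ?_
    rw [mul_left_comm, T4_formula hμ hn]
  simp only [h1]
  rw [S4_row ((n:ℝ) + 2) (fun a b c e => ∑ i, ∑ k, C i b * D i a * C k e * D k c)
    (fun a b c e => ∑ i, ∑ j, C i b * D j a * C i e * D j c)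
    (fun a b c e => ∑ i, ∑ j, C i b * D j a * C j e * D i c)]
  have e11 : ∑ a, ∑ c, ∑ i, ∑ k, C i a * D i a * C k c * D k c =
      (∑ k, ∑ a, C k a * D k a) ^ 2 := by
    rw [Finset.sum_comm (f := fun k a => C k a * D k a), sq, Finset.sum_mul_sum]
    refine Finset.sum_congr rfl fun a _ => Finset.sum_congr rfl fun c _ => ?_
    rw [Finset.sum_mul_sum]
    refine Finset.sum_congr rfl fun a _ => Finset.sum_congr rfl fun c _ => ?_
    ring
  have e33 : ∑ a, ∑ c, ∑ i, ∑ j, C i c * D j a * C j a * D i c =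
      (∑ k, ∑ a, C k a * D k a) ^ 2 := by
    rw [Finset.sum_comm, Finset.sum_comm (f := fun k a => C k a * D k a), sq, Finset.sum_mul_sum]
    refine Finset.sum_congr rfl fun a _ => Finset.sum_congr rfl fun c _ => ?_
    rw [Finset.sum_mul_sum]
    refine Finset.sum_congr rfl fun a _ => Finset.sum_congr rfl fun c _ => ?_
    ring
  have e22 : ∑ a, ∑ c, ∑ i, ∑ j, C i c * D j a * C i c * D j a =
      (∑ k, ∑ a, C k a ^ 2) * (∑ k, ∑ a, D k a ^ 2) := by
    rw [Finset.sum_comm, Finset.sum_comm (f := fun k a => C k a ^ 2),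
      Finset.sum_comm (f := fun k a => D k a ^ 2), Finset.sum_mul_sum]
    refine Finset.sum_congr rfl fun a _ => Finset.sum_congr rfl fun c _ => ?_
    rw [Finset.sum_mul_sum]
    refine Finset.sum_congr rfl fun a _ => Finset.sum_congr rfl fun c _ => ?_
    ring
  have rot : ∀ f : Fin n → Fin n → Fin n → Fin n → ℝ,
      ∑ a, ∑ c, ∑ i, ∑ j, f a c i j = ∑ i, ∑ j, ∑ a, ∑ c, f a c i j := by
    intro f
    rw [sum_rot3]
    refine Finset.sum_congr rfl fun i _ => ?_
    rw [sum_rot3]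
  have e12 : ∑ a, ∑ c, ∑ i, ∑ j, C i a * D j a * C i c * D j c = ∑ k, ∑ l, (C * Dᵀ) k l ^ 2 := by
    rw [rot]
    refine Finset.sum_congr rfl fun a _ => Finset.sum_congr rfl fun c _ => ?_
    rw [Matrix.mul_apply, sq, Finset.sum_mul_sum]
    refine Finset.sum_congr rfl fun a _ => Finset.sum_congr rfl fun c _ => ?_
    simp only [Matrix.transpose_apply]; ring
  have e32 : ∑ a, ∑ c, ∑ i, ∑ j, C i c * D j a * C i a * D j c = ∑ k, ∑ l, (C * Dᵀ) k l ^ 2 := by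
    rw [rot]
    refine Finset.sum_congr rfl fun a _ => Finset.sum_congr rfl fun c _ => ?_
    rw [Matrix.mul_apply, sq, Finset.sum_mul_sum]
    refine Finset.sum_congr rfl fun a _ => Finset.sum_congr rfl fun c _ => ?_
    simp only [Matrix.transpose_apply]; ring
  have e13 : ∑ a, ∑ c, ∑ i, ∑ j, C i a * D j a * C j c * D i c =
      ∑ k, ∑ l, (C * Dᵀ) k l * (C * Dᵀ) l k := by
    rw [rot]
    refine Finset.sum_congr rfl fun a _ => Finset.sum_congr rfl fun c _ => ?_
    rw [Matrix.mul_apply, Matrix.mul_apply, Finset.sum_mul_sum]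
    refine Finset.sum_congr rfl fun a _ => Finset.sum_congr rfl fun c _ => ?_
    simp only [Matrix.transpose_apply]; ring
  have e21 : ∑ a, ∑ c, ∑ i, ∑ k, C i c * D i a * C k c * D k a = ∑ k, ∑ l, (Cᵀ * D) k l ^ 2 := by
    rw [Finset.sum_comm]
    refine Finset.sum_congr rfl fun a _ => Finset.sum_congr rfl fun c _ => ?_
    rw [Matrix.mul_apply, sq, Finset.sum_mul_sum]
    refine Finset.sum_congr rfl fun a _ => Finset.sum_congr rfl fun c _ => ?_
    simp only [Matrix.transpose_apply]; ring
  have e23 : ∑ a, ∑ c, ∑ i, ∑ j, C i c * D j a * C j c * D i a = ∑ k, ∑ l, (Cᵀ * D) k l ^ 2 := by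
    rw [Finset.sum_comm]
    refine Finset.sum_congr rfl fun a _ => Finset.sum_congr rfl fun c _ => ?_
    rw [Matrix.mul_apply, sq, Finset.sum_mul_sum]
    refine Finset.sum_congr rfl fun a _ => Finset.sum_congr rfl fun c _ => ?_
    simp only [Matrix.transpose_apply]; ring
  have e31 : ∑ a, ∑ c, ∑ i, ∑ k, C i c * D i a * C k a * D k c =
      ∑ k, ∑ l, (Cᵀ * D) k l * (Cᵀ * D) l k := by
    rw [Finset.sum_comm]
    refine Finset.sum_congr rfl fun a _ => Finset.sum_congr rfl fun c _ => ?_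
    rw [Matrix.mul_apply, Matrix.mul_apply, Finset.sum_mul_sum]
    refine Finset.sum_congr rfl fun a _ => Finset.sum_congr rfl fun c _ => ?_
    simp only [Matrix.transpose_apply]; ring
  rw [e11, e12, e13, e21, e22, e23, e31, e32, e33]
  ring

theorem F_var {n : ℕ} {μ : Measure (Matrix (Fin n) (Fin n) ℝ)} (hμ : IsHaarO n μ)
    (hn : 2 ≤ n) (C D : Matrix (Fin n) (Fin n) ℝ) (hC : ∑ k, ∑ a, C k a ^ 2 = n)
    (hD : ∑ k, ∑ a, D k a ^ 2 = n) (δ : ℝ) (hδ : δ = 0 ∨ δ = 1)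
    (hCD : ∑ k, ∑ a, C k a * D k a = n * δ) :
    ∫ M, (δ - (D * (M * C * M)).trace) ^ 2 ∂μ ≤ 2 := by
  have := hμ.1
  have hn' : (2:ℝ) ≤ n := by exact_mod_cast hn
  have gen : ∀ U : Matrix (Fin n) (Fin n) ℝ, U.trace = n * δ →
      3 * n * δ ^ 2 ≤ 2 * ∑ k, ∑ l, U k l ^ 2 + ∑ k, ∑ l, U k l * U l k := by
    intro U hU
    have cs : (U.trace) ^ 2 ≤ n * ∑ k, U k k ^ 2 := by
      have := sq_sum_le_card_mul_sum_sq (s := (Finset.univ : Finset (Fin n))) (f := fun k => U k k)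
      simpa [Matrix.trace] using this
    rw [hU] at cs
    have cs' : n * δ ^ 2 ≤ ∑ k, U k k ^ 2 := by
      have : (n:ℝ) * (n * δ^2) ≤ n * ∑ k, U k k ^ 2 := by linarith
      exact le_of_mul_le_mul_left this (by linarith)
    have d1 : ∑ k, U k k ^ 2 ≤ ∑ k, ∑ l, U k l ^ 2 := by
      refine Finset.sum_le_sum fun k _ => ?_
      exact Finset.single_le_sum (f := fun l => U k l ^ 2) (fun l _ => sq_nonneg _) (Finset.mem_univ k)
    have d2 : ∑ k, 4 * U k k ^ 2 ≤ ∑ k, ∑ l, (U k l + U l k) ^ 2 := by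
      refine Finset.sum_le_sum fun k _ => ?_
      refine le_trans (le_of_eq ?_) (Finset.single_le_sum (f := fun l => (U k l + U l k) ^ 2)
        (fun l _ => sq_nonneg _) (Finset.mem_univ k))
      ring
    have d3 : ∑ k, ∑ l, (U k l + U l k) ^ 2 = 2 * ∑ k, ∑ l, U k l ^ 2 + 2 * ∑ k, ∑ l, U k l * U l k := by
      have e : ∑ k, ∑ l, U l k ^ 2 = ∑ k, ∑ l, U k l ^ 2 := Finset.sum_comm
      rw [two_mul, Finset.mul_sum]
      nth_rewrite 2 [← e]
      simp only [Finset.mul_sum, ← Finset.sum_add_distrib]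
      refine Finset.sum_congr rfl fun k _ => Finset.sum_congr rfl fun l _ => ?_
      ring
    rw [← Finset.mul_sum] at d2
    linarith
  have hU := gen (C * Dᵀ) (by
    rw [← hCD]; simp [Matrix.trace, Matrix.mul_apply])
  have hV := gen (Cᵀ * D) (by
    rw [← hCD, Finset.sum_comm]; simp [Matrix.trace, Matrix.mul_apply])
  have hf := F_sq_formula hμ hn C D
  rw [hC, hD, hCD] at hf
  have hm := F_mean hμ hn C D
  rw [hCD, mul_div_cancel_left₀ _ (by linarith : (n:ℝ) ≠ 0)] at hm
  have hexp : ∫ M, (δ - (D * (M * C * M)).trace) ^ 2 ∂μ =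
      ∫ M, (D * (M * C * M)).trace ^ 2 ∂μ - δ ^ 2 := by
    have : ∀ M : Matrix (Fin n) (Fin n) ℝ, (δ - (D * (M * C * M)).trace) ^ 2 =
      ((D * (M * C * M)).trace ^ 2 - 2 * δ * (D * (M * C * M)).trace) + δ ^ 2 := by intro M; ring
    simp_rw [this]
    rw [integral_add (haar_integrable hμ (by fun_prop)) (integrable_const _),
      integral_sub (haar_integrable hμ (by fun_prop)) (haar_integrable hμ (by fun_prop)),
      integral_const_mul, hm]
    simp; ring
  rw [hexp]
  set I := ∫ M, (D * (M * C * M)).trace ^ 2 ∂μ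
  have hN : 0 < (n:ℝ) * (n - 1) * (n + 2) := by
    apply mul_pos (mul_pos _ _) <;> linarith
  refine le_of_mul_le_mul_left ?_ hN
  rw [mul_sub, hf]
  rcases hδ with h | h
  · subst h
    nlinarith [mul_nonneg (by linarith : (0:ℝ) ≤ n) (by nlinarith : (0:ℝ) ≤ n^2+n-4)]
  · subst h
    nlinarith

end VarPart

section GaussPart

theorem gauss_integrable_iff (f : ℝ → ℝ) : Integrable f (gaussianReal 0 1) ↔
    Integrable (fun x => gaussianPDFReal 0 1 x * f x) := by
  rw [gaussianReal_of_var_ne_zero 0 one_ne_zero,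
    integrable_withDensity_iff_integrable_smul' (measurable_gaussianPDF _ _)
      (ae_of_all _ fun _ => gaussianPDF_lt_top)]
  simp

theorem gauss_pdf_deriv (x : ℝ) :
    HasDerivAt (gaussianPDFReal 0 1) (-(x * gaussianPDFReal 0 1 x)) x := by
  unfold gaussianPDFReal
  have h : HasDerivAt (fun x : ℝ => -(x - 0) ^ 2 / (2 * ((1:ℝ≥0):ℝ))) (-x) x := by
    have := (((hasDerivAt_id x).sub_const 0).pow 2).neg.div_const (2 * ((1:ℝ≥0):ℝ))
    refine this.congr_deriv ?_
    simp only [id, NNReal.coe_one]; norm_num; ring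
  refine (h.exp.const_mul _).congr_deriv ?_
  ring

theorem gauss_ibp1 {f f' : ℝ → ℝ} (hf : ∀ x, HasDerivAt f (f' x) x)
    (h1 : Integrable f (gaussianReal 0 1)) (h2 : Integrable (fun x => x * f x) (gaussianReal 0 1))
    (h3 : Integrable f' (gaussianReal 0 1)) :
    ∫ x, x * f x ∂(gaussianReal 0 1) = ∫ x, f' x ∂(gaussianReal 0 1) := by
  rw [gauss_integrable_iff] at h1 h2 h3
  rw [integral_gaussianReal_eq_integral_smul one_ne_zero,
    integral_gaussianReal_eq_integral_smul one_ne_zero]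
  have := integral_mul_deriv_eq_deriv_mul_of_integrable
    (u := gaussianPDFReal 0 1) (v := f) (v' := f') (u' := fun x => -(x * gaussianPDFReal 0 1 x))
    (fun x _ => gauss_pdf_deriv x) (fun x _ => hf x) h3
    (by refine h2.neg.congr (ae_of_all _ fun x => ?_); simp; ring) h1
  simp only [smul_eq_mul]
  rw [this, ← integral_neg]
  congr 1; ext x; ring

/-- standard Gaussian on coordinates -/
noncomputable def gpi (d : ℕ) : Measure (Fin d → ℝ) := Measure.pi fun _ => gaussianReal 0 1

instance (d : ℕ) : IsProbabilityMeasure (gpi d) := by unfold gpi; infer_instance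

theorem gpi_memLp {d : ℕ} (j : Fin d) : MemLp (fun z : Fin d → ℝ => z j) 2 (gpi d) := by
  have h := measurePreserving_eval (fun _ : Fin d => gaussianReal 0 1) j
  exact (memLp_id_gaussianReal' (μ := 0) (v := 1) 2 (by simp)).comp_measurePreserving h

theorem gpi_ibp {d : ℕ} {f : (Fin d → ℝ) → ℝ} (hf : Differentiable ℝ f) (j : Fin d)
    (h1 : Integrable f (gpi d)) (h2 : Integrable (fun z => z j * f z) (gpi d))
    (h3 : Integrable (fun z => fderiv ℝ f z (Pi.single j 1)) (gpi d)) :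
    ∫ z, z j * f z ∂(gpi d) = ∫ z, fderiv ℝ f z (Pi.single j 1) ∂(gpi d) := by
  cases d with
  | zero => exact j.elim0
  | succ m =>
  have hmp := (measurePreserving_piFinSuccAbove (fun _ : Fin (m+1) => gaussianReal 0 1) j).symm
  have key : ∀ F : (Fin (m+1) → ℝ) → ℝ, Integrable F (gpi (m+1)) →
      Integrable (fun p : ℝ × (Fin m → ℝ) => F (j.insertNth p.1 p.2))
        ((gaussianReal 0 1).prod (gpi m)) ∧
      ∫ z, F z ∂(gpi (m+1)) =
        ∫ y, ∫ x, F (j.insertNth x y) ∂(gaussianReal 0 1) ∂(gpi m) := by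
    intro F hF
    have hi : Integrable (fun p : ℝ × (Fin m → ℝ) => F (j.insertNth p.1 p.2))
        ((gaussianReal 0 1).prod (gpi m)) :=
      hmp.integrable_comp_of_integrable hF
    refine ⟨hi, ?_⟩
    have e := hmp.integral_comp' (g := F)
    rw [← integral_prod_symm _ hi]
    exact e.symm
  obtain ⟨i1, -⟩ := key _ h1
  obtain ⟨i2, e2⟩ := key _ h2
  obtain ⟨i3, e3⟩ := key _ h3
  rw [e2, e3]
  refine integral_congr_ae ?_
  filter_upwards [i1.prod_left_ae, i2.prod_left_ae, i3.prod_left_ae] with y a1 a2 a3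
  simp only [Fin.insertNth_apply_same] at a2 ⊢
  refine gauss_ibp1 (f := fun x => f (j.insertNth x y)) (fun x => ?_) a1 a2 a3
  have hd : HasDerivAt (fun x : ℝ => (j.insertNth x y : Fin (m+1) → ℝ)) (Pi.single j 1) x := by
    rw [hasDerivAt_pi]
    intro i
    rcases Fin.eq_self_or_eq_succAbove j i with h | ⟨k, h⟩
    · subst h; simpa using hasDerivAt_id' x
    · subst h; simpa [Pi.single_apply] using hasDerivAt_const x (y k)
  exact (hf _).hasFDerivAt.comp_hasDerivAt x hd

theorem gpi_cov {d : ℕ} (j k : Fin d) : ∫ z, z j * z k ∂(gpi d) = kd j k := by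
  have hL : Differentiable ℝ (fun z : Fin d → ℝ => z k) := by fun_prop
  have hfd : ∀ z, fderiv ℝ (fun z : Fin d → ℝ => z k) z (Pi.single j 1) = kd j k := by
    intro z
    have : HasFDerivAt (fun z : Fin d → ℝ => z k) (ContinuousLinearMap.proj k) z :=
      (ContinuousLinearMap.proj (R := ℝ) (φ := fun _ : Fin d => ℝ) k).hasFDerivAt
    rw [this.fderiv]
    simp [kd, Pi.single_apply, eq_comm]
  rw [gpi_ibp hL j ((gpi_memLp k).integrable (by norm_num)) ((gpi_memLp j).integrable_mul (gpi_memLp k))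
    (by simp [hfd])]
  simp [hfd]

/-- second moment of a linear image -/
theorem gpi_quad {d : ℕ} (H : Fin d → Fin d → ℝ) :
    Integrable (fun z : Fin d → ℝ => ∑ i, (∑ j, H i j * z j) ^ 2) (gpi d) ∧
    ∫ z, ∑ i, (∑ j, H i j * z j) ^ 2 ∂(gpi d) = ∑ i, ∑ j, H i j ^ 2 := by
  have e : ∀ z : Fin d → ℝ, ∑ i, (∑ j, H i j * z j) ^ 2 =
      ∑ i, ∑ j, ∑ k, (H i j * H i k) * (z j * z k) := by
    intro z
    refine Finset.sum_congr rfl fun i _ => ?_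
    rw [sq, Finset.sum_mul_sum]
    refine Finset.sum_congr rfl fun j _ => Finset.sum_congr rfl fun k _ => ?_
    ring
  have hi : ∀ i j k, Integrable (fun z : Fin d → ℝ => (H i j * H i k) * (z j * z k)) (gpi d) :=
    fun i j k => ((gpi_memLp j).integrable_mul (gpi_memLp k)).const_mul _
  simp only [e]
  have hi2 : ∀ i j, Integrable (fun z : Fin d → ℝ => ∑ k, (H i j * H i k) * (z j * z k)) (gpi d) :=
    fun i j => integrable_finsetSum _ fun k _ => hi i j k
  have hi3 : ∀ i, Integrable (fun z : Fin d → ℝ => ∑ j, ∑ k, (H i j * H i k) * (z j * z k)) (gpi d) :=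
    fun i => integrable_finsetSum _ fun k _ => hi2 i k
  refine ⟨integrable_finsetSum _ fun i _ => hi3 i, ?_⟩
  rw [integral_finsetSum _ fun i _ => hi3 i]
  refine Finset.sum_congr rfl fun i _ => ?_
  rw [integral_finsetSum _ fun j _ => hi2 i j]
  refine Finset.sum_congr rfl fun j _ => ?_
  rw [integral_finsetSum _ fun k _ => hi i j k]
  simp only [integral_const_mul, gpi_cov]
  have : ∀ k, H i j * H i k * kd j k = kd j k * (H i j * H i k) := by intros; ring
  simp only [this, kd_sum]
  ring

end GaussPart

section InterpPart

attribute [local instance] Matrix.linftyOpNormedRing Matrix.linftyOpNormedAlgebra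

/-- the trace map -/
def xL {n d : ℕ} (C : Fin d → Matrix (Fin n) (Fin n) ℝ) :
    Matrix (Fin n) (Fin n) ℝ →ₗ[ℝ] (Fin d → ℝ) where
  toFun M i := (C i * M).trace
  map_add' M N := by ext i; simp [Matrix.mul_add]
  map_smul' r M := by ext i; simp

theorem xL_apply {n d : ℕ} (C : Fin d → Matrix (Fin n) (Fin n) ℝ) (M : Matrix (Fin n) (Fin n) ℝ)
    (i : Fin d) : xL C M i = (C i * M).trace := rfl

theorem xL_cont {n d : ℕ} (C : Fin d → Matrix (Fin n) (Fin n) ℝ) : Continuous (xL C) := by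
  refine continuous_pi fun i => ?_
  simp only [xL_apply]
  fun_prop

/-- partial derivative -/
noncomputable def pd {d : ℕ} (f : (Fin d → ℝ) → ℝ) (j : Fin d) (x : Fin d → ℝ) : ℝ :=
  fderiv ℝ f x (Pi.single j 1)

theorem fderiv_eq_pd {d : ℕ} (f : (Fin d → ℝ) → ℝ) (x v : Fin d → ℝ) :
    fderiv ℝ f x v = ∑ j, v j * pd f j x := by
  have := LinearMap.pi_apply_eq_sum_univ (fderiv ℝ f x).toLinearMap v
  simp only [ContinuousLinearMap.coe_coe, smul_eq_mul] at this
  rw [this]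
  refine Finset.sum_congr rfl fun j _ => ?_
  unfold pd
  congr 2
  ext i; simp [Pi.single_apply, eq_comm]

theorem pd_cont {d : ℕ} {f : (Fin d → ℝ) → ℝ} (hf : ContDiff ℝ 1 f) (j : Fin d) :
    Continuous (pd f j) :=
  (hf.continuous_fderiv one_ne_zero).clm_apply continuous_const

theorem prod_int {n d : ℕ} {μ : Measure (Matrix (Fin n) (Fin n) ℝ)} (hμ : IsHaarO n μ)
    {φ : Matrix (Fin n) (Fin n) ℝ → ℝ} (hφ : Continuous φ)
    {F : Matrix (Fin n) (Fin n) ℝ × (Fin d → ℝ) → ℝ} (hF : Continuous F) {K : ℝ}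
    (hK : ∀ p, |F p| ≤ K) : Integrable (fun p => φ p.1 * F p) (μ.prod (gpi d)) := by
  have := hμ.1
  exact ((haar_integrable hμ hφ).comp_fst (gpi d)).mul_bdd hF.aestronglyMeasurable
    (ae_of_all _ hK)

theorem prod_int' {n d : ℕ} {μ : Measure (Matrix (Fin n) (Fin n) ℝ)} (hμ : IsHaarO n μ)
    {φ : Matrix (Fin n) (Fin n) ℝ → ℝ} (hφ : Continuous φ) (j : Fin d)
    {F : Matrix (Fin n) (Fin n) ℝ × (Fin d → ℝ) → ℝ} (hF : Continuous F) {K : ℝ}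
    (hK : ∀ p, |F p| ≤ K) : Integrable (fun p => φ p.1 * p.2 j * F p) (μ.prod (gpi d)) := by
  have := hμ.1
  exact ((haar_integrable hμ hφ).mul_prod ((gpi_memLp j).integrable (by norm_num))).mul_bdd
    hF.aestronglyMeasurable (ae_of_all _ hK)

theorem lemA {n d : ℕ} {μ : Measure (Matrix (Fin n) (Fin n) ℝ)} (hμ : IsHaarO n μ)
    (C : Fin d → Matrix (Fin n) (Fin n) ℝ)
    (hC : ∀ i j, ∑ k, ∑ a, C i k a * C j k a = n * kd i j)
    {f : (Fin d → ℝ) → ℝ} (hf : ContDiff ℝ 1 f) {K : ℝ} (hK : ∀ x, |f x| ≤ K)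
    (hK' : ∀ j x, |pd f j x| ≤ K) (c s : ℝ) (i : Fin d) :
    ((n:ℝ) - 1) * ∫ p, xL C p.1 i * f (c • xL C p.1 + s • p.2) ∂(μ.prod (gpi d)) =
    ∑ j, ∫ p, (c * (n * kd i j - (C j * (p.1 * C i * p.1)).trace)) *
      pd f j (c • xL C p.1 + s • p.2) ∂(μ.prod (gpi d)) := by
  have := hμ.1
  have hx := xL_cont C
  have hfc := hf.continuous
  have i1 : Integrable (fun p : Matrix (Fin n) (Fin n) ℝ × (Fin d → ℝ) =>
      xL C p.1 i * f (c • xL C p.1 + s • p.2)) (μ.prod (gpi d)) :=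
    prod_int hμ (φ := fun M => xL C M i) (by fun_prop)
      (F := fun p => f (c • xL C p.1 + s • p.2)) (by fun_prop) (fun p => hK _)
  have i2 : ∀ j, Integrable (fun p : Matrix (Fin n) (Fin n) ℝ × (Fin d → ℝ) =>
      (c * (n * kd i j - (C j * (p.1 * C i * p.1)).trace)) * pd f j (c • xL C p.1 + s • p.2))
      (μ.prod (gpi d)) := fun j => by
    have := pd_cont hf j
    exact prod_int hμ (φ := fun M => c * (n * kd i j - (C j * (M * C i * M)).trace)) (by fun_prop)
      (F := fun p => pd f j (c • xL C p.1 + s • p.2)) (by fun_prop) (fun p => hK' _ _)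
  rw [← integral_finsetSum _ fun j _ => i2 j]
  rw [integral_prod_symm _ i1, integral_prod_symm _ (integrable_finsetSum _ fun j _ => i2 j),
    ← integral_const_mul]
  congr 1; ext z
  have hh : ContDiff ℝ 1 (fun M : Matrix (Fin n) (Fin n) ℝ => f (c • xL C M + s • z)) := by
    refine hf.comp ?_
    exact (((xL C).toContinuousLinearMap.contDiff).const_smul c).add contDiff_const
  refine (haar_SD hμ hh (C i)).trans ?_
  congr 1; ext M
  have hd : HasFDerivAt (fun M : Matrix (Fin n) (Fin n) ℝ => f (c • xL C M + s • z))
      ((fderiv ℝ f (c • xL C M + s • z)).comp (c • (xL C).toContinuousLinearMap)) M := by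
    refine HasFDerivAt.comp M ((hf.differentiable one_ne_zero) _).hasFDerivAt ?_
    exact (((xL C).toContinuousLinearMap.hasFDerivAt).const_smul c).add_const _
  rw [hd.fderiv]
  simp only [ContinuousLinearMap.comp_apply, ContinuousLinearMap.smul_apply]
  rw [fderiv_eq_pd]
  refine Finset.sum_congr rfl fun j _ => ?_
  congr 1
  change c * (C j * ((C i)ᵀ - M * C i * M)).trace = _
  rw [Matrix.mul_sub, Matrix.trace_sub, ← hC]
  congr 2
  simp only [Matrix.trace, Matrix.diag, Matrix.mul_apply, Matrix.transpose_apply]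
  refine Finset.sum_congr rfl fun k _ => Finset.sum_congr rfl fun a _ => ?_
  ring

theorem lemB {n d : ℕ} {μ : Measure (Matrix (Fin n) (Fin n) ℝ)} (hμ : IsHaarO n μ)
    (C : Fin d → Matrix (Fin n) (Fin n) ℝ)
    {f : (Fin d → ℝ) → ℝ} (hf : ContDiff ℝ 1 f) {K : ℝ} (hK : ∀ x, |f x| ≤ K)
    (hK' : ∀ j x, |pd f j x| ≤ K) (c s : ℝ)
    {φ : Matrix (Fin n) (Fin n) ℝ → ℝ} (hφ : Continuous φ) (j : Fin d) :
    ∫ p, φ p.1 * p.2 j * f (c • xL C p.1 + s • p.2) ∂(μ.prod (gpi d)) =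
    s * ∫ p, φ p.1 * pd f j (c • xL C p.1 + s • p.2) ∂(μ.prod (gpi d)) := by
  have := hμ.1
  have hx := xL_cont C
  have hfc := hf.continuous
  have hpc := pd_cont hf j
  have i1 : Integrable (fun p : Matrix (Fin n) (Fin n) ℝ × (Fin d → ℝ) =>
      φ p.1 * p.2 j * f (c • xL C p.1 + s • p.2)) (μ.prod (gpi d)) :=
    prod_int' hμ hφ j (F := fun p => f (c • xL C p.1 + s • p.2)) (by fun_prop) (fun p => hK _)
  have i2 : Integrable (fun p : Matrix (Fin n) (Fin n) ℝ × (Fin d → ℝ) =>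
      φ p.1 * pd f j (c • xL C p.1 + s • p.2)) (μ.prod (gpi d)) :=
    prod_int hμ hφ (F := fun p => pd f j (c • xL C p.1 + s • p.2)) (by fun_prop) (fun p => hK' _ _)
  rw [integral_prod _ i1, integral_prod _ i2, ← integral_const_mul]
  congr 1; ext M
  simp only [mul_assoc, integral_const_mul]
  rw [mul_left_comm]
  congr 1
  have hd : ∀ z, HasFDerivAt (fun z : Fin d → ℝ => f (c • xL C M + s • z))
      ((fderiv ℝ f (c • xL C M + s • z)).comp (s • ContinuousLinearMap.id ℝ (Fin d → ℝ))) z := by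
    intro z
    refine HasFDerivAt.comp z ((hf.differentiable one_ne_zero) _).hasFDerivAt ?_
    exact ((hasFDerivAt_id z).const_smul s).const_add _
  have hpd : ∀ z, fderiv ℝ (fun z : Fin d → ℝ => f (c • xL C M + s • z)) z (Pi.single j 1) =
      s * pd f j (c • xL C M + s • z) := by
    intro z
    rw [(hd z).fderiv]
    simp [pd]
  have hb : ∀ {G : (Fin d → ℝ) → ℝ}, Continuous G → (∀ x, |G x| ≤ K) →
      Integrable (fun z : Fin d → ℝ => G (c • xL C M + s • z)) (gpi d) := by
    intro G hG hGK
    exact Integrable.of_bound (by fun_prop) K (ae_of_all _ fun z => hGK _)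
  rw [← integral_const_mul, gpi_ibp (f := fun z => f (c • xL C M + s • z))
    (fun z => (hd z).differentiableAt) j (hb hfc hK)]
  · simp only [hpd]
  · exact ((gpi_memLp j).integrable (by norm_num)).mul_bdd (by fun_prop) (ae_of_all _ fun z => hK _)
  · simp only [hpd]
    exact (hb hpc (hK' j)).const_mul s

end InterpPart

section PsiPart

theorem pd_contDiff {d : ℕ} {g : (Fin d → ℝ) → ℝ} (hg : ContDiff ℝ 2 g) (i : Fin d) :
    ContDiff ℝ 1 (pd g i) :=
  (hg.fderiv_right (m := 1) (by norm_num)).clm_apply contDiff_const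

theorem psi_hasDeriv {n d : ℕ} {μ : Measure (Matrix (Fin n) (Fin n) ℝ)} (hμ : IsHaarO n μ)
    (C : Fin d → Matrix (Fin n) (Fin n) ℝ)
    {g : (Fin d → ℝ) → ℝ} (hg : ContDiff ℝ 2 g) {K : ℝ} (hK : ∀ x, |g x| ≤ K)
    (hK' : ∀ j x, |pd g j x| ≤ K) (θ : ℝ) :
    HasDerivAt (fun θ => ∫ p, g (Real.cos θ • xL C p.1 + Real.sin θ • p.2) ∂(μ.prod (gpi d)))
      (∫ p, ∑ i, (-Real.sin θ * xL C p.1 i + Real.cos θ * p.2 i) *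
        pd g i (Real.cos θ • xL C p.1 + Real.sin θ • p.2) ∂(μ.prod (gpi d))) θ := by
  have := hμ.1
  have hx := xL_cont C
  have hgc := hg.continuous
  have hg1 : ContDiff ℝ 1 g := hg.of_le (by norm_num)
  have hpc := pd_cont hg1
  have hK0 : 0 ≤ K := (abs_nonneg _).trans (hK 0)
  have q1 : ∀ t : ℝ, AEStronglyMeasurable (fun p : Matrix (Fin n) (Fin n) ℝ × (Fin d → ℝ) =>
      g (Real.cos t • xL C p.1 + Real.sin t • p.2)) (μ.prod (gpi d)) := fun t =>
    Continuous.aestronglyMeasurable (by fun_prop)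
  have q2 : Integrable (fun p : Matrix (Fin n) (Fin n) ℝ × (Fin d → ℝ) =>
      g (Real.cos θ • xL C p.1 + Real.sin θ • p.2)) (μ.prod (gpi d)) :=
    Integrable.of_bound (q1 θ) K (ae_of_all _ fun z => hK _)
  have q3 : AEStronglyMeasurable (fun p : Matrix (Fin n) (Fin n) ℝ × (Fin d → ℝ) =>
      ∑ i, (-Real.sin θ * xL C p.1 i + Real.cos θ * p.2 i) *
        pd g i (Real.cos θ • xL C p.1 + Real.sin θ • p.2)) (μ.prod (gpi d)) :=
    Continuous.aestronglyMeasurable (by fun_prop)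
  have q4 : ∀ (p : Matrix (Fin n) (Fin n) ℝ × (Fin d → ℝ)) (t : ℝ),
      ‖∑ i, (-Real.sin t * xL C p.1 i + Real.cos t * p.2 i) *
        pd g i (Real.cos t • xL C p.1 + Real.sin t • p.2)‖ ≤ ∑ i, (|xL C p.1 i| + |p.2 i|) * K := by
    intro p t
    rw [Real.norm_eq_abs]
    refine (Finset.abs_sum_le_sum_abs _ _).trans (Finset.sum_le_sum fun i _ => ?_)
    rw [abs_mul]
    refine mul_le_mul ?_ (hK' _ _) (abs_nonneg _) (by positivity)
    refine (abs_add_le _ _).trans ?_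
    rw [abs_mul, abs_mul, abs_neg]
    exact add_le_add (mul_le_of_le_one_left (abs_nonneg _) (Real.abs_sin_le_one _))
      (mul_le_of_le_one_left (abs_nonneg _) (Real.abs_cos_le_one _))
  have q5 : Integrable (fun p : Matrix (Fin n) (Fin n) ℝ × (Fin d → ℝ) =>
      ∑ i, (|xL C p.1 i| + |p.2 i|) * K) (μ.prod (gpi d)) := by
    refine integrable_finsetSum _ fun i _ => ?_
    have h1 : Integrable (fun p : Matrix (Fin n) (Fin n) ℝ × (Fin d → ℝ) => |xL C p.1 i|)
        (μ.prod (gpi d)) :=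
      (haar_integrable hμ (f := fun M => |xL C M i|) (by fun_prop)).comp_fst (gpi d)
    have h2 : Integrable (fun p : Matrix (Fin n) (Fin n) ℝ × (Fin d → ℝ) => |p.2 i|)
        (μ.prod (gpi d)) :=
      (((gpi_memLp i).integrable (by norm_num)).abs).comp_snd μ
    exact (h1.add h2).mul_const K
  have q6 : ∀ (p : Matrix (Fin n) (Fin n) ℝ × (Fin d → ℝ)) (t : ℝ),
      HasDerivAt (fun t => g (Real.cos t • xL C p.1 + Real.sin t • p.2))
      (∑ i, (-Real.sin t * xL C p.1 i + Real.cos t * p.2 i) *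
        pd g i (Real.cos t • xL C p.1 + Real.sin t • p.2)) t := by
    intro p t
    have hd : HasDerivAt (fun t : ℝ => Real.cos t • xL C p.1 + Real.sin t • p.2)
        ((-Real.sin t) • xL C p.1 + Real.cos t • p.2) t :=
      ((Real.hasDerivAt_cos t).smul_const _).add ((Real.hasDerivAt_sin t).smul_const _)
    have := ((hg1.differentiable one_ne_zero) _).hasFDerivAt.comp_hasDerivAt t hd
    refine this.congr_deriv ?_
    rw [fderiv_eq_pd]
    simp
  exact (hasDerivAt_integral_of_dominated_loc_of_deriv_le (s := Set.univ) Filter.univ_mem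
    (Filter.Eventually.of_forall q1) q2 q3 (ae_of_all _ fun p t _ => q4 p t) q5
    (ae_of_all _ fun p t _ => q6 p t)).2

theorem psi_formula {n d : ℕ} {μ : Measure (Matrix (Fin n) (Fin n) ℝ)} (hμ : IsHaarO n μ)
    (C : Fin d → Matrix (Fin n) (Fin n) ℝ)
    (hC : ∀ i j, ∑ k, ∑ a, C i k a * C j k a = n * kd i j)
    {g : (Fin d → ℝ) → ℝ} (hg : ContDiff ℝ 2 g) {K : ℝ}
    (hK' : ∀ j x, |pd g j x| ≤ K) (hK'' : ∀ i j x, |pd (pd g i) j x| ≤ K) (c s : ℝ) :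
    ((n:ℝ) - 1) * ∫ p, ∑ i, (-s * xL C p.1 i + c * p.2 i) *
        pd g i (c • xL C p.1 + s • p.2) ∂(μ.prod (gpi d)) =
    -c * ∫ p, ∑ i, (∑ j, (kd i j - (C j * (p.1 * C i * p.1)).trace) * p.2 j) *
        pd g i (c • xL C p.1 + s • p.2) ∂(μ.prod (gpi d)) := by
  have := hμ.1
  have hx := xL_cont C
  have hgc := hg.continuous
  have hp1 := pd_contDiff hg
  have hpc := fun i => (hp1 i).continuous
  have hpc2 := fun i => pd_cont (hp1 i)
  have i1 : ∀ i, Integrable (fun p : Matrix (Fin n) (Fin n) ℝ × (Fin d → ℝ) =>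
      xL C p.1 i * pd g i (c • xL C p.1 + s • p.2)) (μ.prod (gpi d)) := fun i =>
    prod_int hμ (φ := fun M => xL C M i) (by fun_prop)
      (F := fun p => pd g i (c • xL C p.1 + s • p.2)) (by fun_prop) (fun p => hK' _ _)
  have i2 : ∀ i, Integrable (fun p : Matrix (Fin n) (Fin n) ℝ × (Fin d → ℝ) =>
      p.2 i * pd g i (c • xL C p.1 + s • p.2)) (μ.prod (gpi d)) := fun i => by
    have := prod_int' hμ (φ := fun M => 1) (by fun_prop) i
      (F := fun p => pd g i (c • xL C p.1 + s • p.2)) (by fun_prop) (fun p => hK' _ _)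
    simpa using this
  have i3 : ∀ i j, Integrable (fun p : Matrix (Fin n) (Fin n) ℝ × (Fin d → ℝ) =>
      (kd i j - (C j * (p.1 * C i * p.1)).trace) * p.2 j * pd g i (c • xL C p.1 + s • p.2))
      (μ.prod (gpi d)) := fun i j =>
    prod_int' hμ (φ := fun M => kd i j - (C j * (M * C i * M)).trace) (by fun_prop) j
      (F := fun p => pd g i (c • xL C p.1 + s • p.2)) (by fun_prop) (fun p => hK' _ _)
  have i4 : ∀ {φ : Matrix (Fin n) (Fin n) ℝ → ℝ}, Continuous φ → ∀ i j,
      Integrable (fun p : Matrix (Fin n) (Fin n) ℝ × (Fin d → ℝ) =>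
      φ p.1 * pd (pd g i) j (c • xL C p.1 + s • p.2)) (μ.prod (gpi d)) := fun hφ i j =>
    prod_int hμ hφ (F := fun p => pd (pd g i) j (c • xL C p.1 + s • p.2))
      (by have := hpc2 i j; fun_prop) (fun p => hK'' _ _ _)
  have e1 : ∀ p : Matrix (Fin n) (Fin n) ℝ × (Fin d → ℝ),
      ∑ i, (-s * xL C p.1 i + c * p.2 i) * pd g i (c • xL C p.1 + s • p.2) =
      ∑ i, (-s * (xL C p.1 i * pd g i (c • xL C p.1 + s • p.2)) +
        c * (p.2 i * pd g i (c • xL C p.1 + s • p.2))) := by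
    intro p; refine Finset.sum_congr rfl fun i _ => ?_; ring
  have e2 : ∀ p : Matrix (Fin n) (Fin n) ℝ × (Fin d → ℝ),
      ∑ i, (∑ j, (kd i j - (C j * (p.1 * C i * p.1)).trace) * p.2 j) *
        pd g i (c • xL C p.1 + s • p.2) =
      ∑ i, ∑ j, (kd i j - (C j * (p.1 * C i * p.1)).trace) * p.2 j *
        pd g i (c • xL C p.1 + s • p.2) := by
    intro p; refine Finset.sum_congr rfl fun i _ => ?_; rw [Finset.sum_mul]
  simp only [e1, e2]
  have i12 : ∀ i, Integrable (fun p : Matrix (Fin n) (Fin n) ℝ × (Fin d → ℝ) =>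
      -s * (xL C p.1 i * pd g i (c • xL C p.1 + s • p.2)) +
        c * (p.2 i * pd g i (c • xL C p.1 + s • p.2))) (μ.prod (gpi d)) :=
    fun i => ((i1 i).const_mul _).add ((i2 i).const_mul _)
  rw [integral_finsetSum _ fun i _ => i12 i,
    integral_finsetSum _ fun i _ => integrable_finsetSum _ fun j _ => i3 i j,
    Finset.mul_sum, Finset.mul_sum]
  refine Finset.sum_congr rfl fun i _ => ?_
  rw [integral_add ((i1 i).const_mul _) ((i2 i).const_mul _), integral_const_mul,
    integral_const_mul, integral_finsetSum _ fun j _ => i3 i j]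
  have hA := lemA hμ C hC (hp1 i) (hK' i) (hK'' i) c s i
  have hB := lemB hμ C (hp1 i) (hK' i) (hK'' i) c s (φ := fun _ => 1) continuous_const i
  simp only [one_mul] at hB
  have hB' : ∀ j, ∫ p, (kd i j - (C j * (p.1 * C i * p.1)).trace) * p.2 j *
        pd g i (c • xL C p.1 + s • p.2) ∂(μ.prod (gpi d)) =
      s * ∫ p, (kd i j - (C j * (p.1 * C i * p.1)).trace) *
        pd (pd g i) j (c • xL C p.1 + s • p.2) ∂(μ.prod (gpi d)) := fun j =>
    lemB hμ C (hp1 i) (hK' i) (hK'' i) c s (φ := fun M => kd i j - (C j * (M * C i * M)).trace)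
      (by fun_prop) j
  rw [hB]
  simp only [hB']
  have eA : ∀ j, ∫ p, (c * (n * kd i j - (C j * (p.1 * C i * p.1)).trace)) *
      pd (pd g i) j (c • xL C p.1 + s • p.2) ∂(μ.prod (gpi d)) =
      c * ∫ p, (kd i j - (C j * (p.1 * C i * p.1)).trace) *
        pd (pd g i) j (c • xL C p.1 + s • p.2) ∂(μ.prod (gpi d)) +
      c * ((n - 1) * (kd i j * ∫ p, pd (pd g i) j (c • xL C p.1 + s • p.2) ∂(μ.prod (gpi d)))) := by
    intro j
    have q1 := i4 (φ := fun M => kd i j - (C j * (M * C i * M)).trace) (by fun_prop) i j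
    have q2 := i4 (φ := fun _ => 1) continuous_const i j
    simp only [one_mul] at q2
    simp only [← integral_const_mul]
    rw [← integral_add (q1.const_mul _) (((q2.const_mul _).const_mul _).const_mul _)]
    congr 1; ext p; ring
  simp only [eA] at hA
  rw [Finset.sum_add_distrib, ← Finset.mul_sum, ← Finset.mul_sum, ← Finset.mul_sum, kd_sum] at hA
  rw [← Finset.mul_sum]
  linear_combination (-s) * hA

theorem psi_bound {n d : ℕ} {μ : Measure (Matrix (Fin n) (Fin n) ℝ)} (hμ : IsHaarO n μ)
    (hn : 2 ≤ n) (hd : 0 < d) (C : Fin d → Matrix (Fin n) (Fin n) ℝ)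
    (hC : ∀ i j, ∑ k, ∑ a, C i k a * C j k a = n * kd i j)
    {g : (Fin d → ℝ) → ℝ} {L : ℝ} (hL : 0 ≤ L)
    (hgL : ∀ x, ∑ i, pd g i x ^ 2 ≤ L ^ 2) (c s : ℝ) :
    |∫ p, ∑ i, (∑ j, (kd i j - (C j * (p.1 * C i * p.1)).trace) * p.2 j) *
        pd g i (c • xL C p.1 + s • p.2) ∂(μ.prod (gpi d))| ≤ L * (Real.sqrt 2 * d) := by
  have := hμ.1
  set κ : ℝ := Real.sqrt 2 * d with hκ
  have hκ0 : 0 < κ := by positivity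
  have hκ2 : κ ^ 2 = 2 * d ^ 2 := by rw [hκ, mul_pow, Real.sq_sqrt (by norm_num)]
  set Q : Matrix (Fin n) (Fin n) ℝ × (Fin d → ℝ) → ℝ := fun p =>
    ∑ i, (∑ j, (kd i j - (C j * (p.1 * C i * p.1)).trace) * p.2 j) ^ 2 with hQ
  have hQi : Integrable Q (μ.prod (gpi d)) := by
    have e : Q = fun p => ∑ i, ∑ j, ∑ k, ((kd i j - (C j * (p.1 * C i * p.1)).trace) *
        (kd i k - (C k * (p.1 * C i * p.1)).trace)) * (p.2 j * p.2 k) := by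
      ext p
      refine Finset.sum_congr rfl fun i _ => ?_
      rw [sq, Finset.sum_mul_sum]
      refine Finset.sum_congr rfl fun j _ => Finset.sum_congr rfl fun k _ => ?_
      ring
    rw [e]
    refine integrable_finsetSum _ fun i _ => integrable_finsetSum _ fun j _ =>
      integrable_finsetSum _ fun k _ => ?_
    exact (haar_integrable hμ (f := fun M => (kd i j - (C j * (M * C i * M)).trace) *
        (kd i k - (C k * (M * C i * M)).trace)) (by fun_prop)).mul_prod
        ((gpi_memLp j).integrable_mul (gpi_memLp k))
  have hQint : ∫ p, Q p ∂(μ.prod (gpi d)) ≤ κ ^ 2 := by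
    rw [integral_prod _ hQi]
    have : ∀ M : Matrix (Fin n) (Fin n) ℝ, ∫ z, Q (M, z) ∂(gpi d) =
        ∑ i, ∑ j, (kd i j - (C j * (M * C i * M)).trace) ^ 2 := fun M =>
      (gpi_quad (fun i j => kd i j - (C j * (M * C i * M)).trace)).2
    simp only [this]
    rw [integral_finsetSum _ fun i _ => haar_integrable hμ (by fun_prop)]
    have hb : ∀ i, ∫ M, ∑ j, (kd i j - (C j * (M * C i * M)).trace) ^ 2 ∂μ ≤ ∑ j : Fin d, 2 := by
      intro i
      rw [integral_finsetSum _ fun i _ => haar_integrable hμ (by fun_prop)]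
      refine Finset.sum_le_sum fun j _ => ?_
      have hs : ∀ i, ∑ k, ∑ a, C i k a ^ 2 = n := by
        intro i
        have := hC i i
        simp only [kd, if_true, mul_one] at this
        simpa only [sq] using this
      refine F_var hμ hn (C i) (C j) (hs i) (hs j) _ ?_ (hC i j)
      unfold kd; split_ifs <;> simp
    refine (Finset.sum_le_sum fun i _ => hb i).trans ?_
    simp [hκ2]; nlinarith
  have hpt : ∀ p : Matrix (Fin n) (Fin n) ℝ × (Fin d → ℝ),
      ‖∑ i, (∑ j, (kd i j - (C j * (p.1 * C i * p.1)).trace) * p.2 j) *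
        pd g i (c • xL C p.1 + s • p.2)‖ ≤ L / 2 * (Q p / κ + κ) := by
    intro p
    rw [Real.norm_eq_abs]
    have cs := Finset.sum_mul_sq_le_sq_mul_sq Finset.univ
      (fun i => ∑ j, (kd i j - (C j * (p.1 * C i * p.1)).trace) * p.2 j)
      (fun i => pd g i (c • xL C p.1 + s • p.2))
    have hQ0 : 0 ≤ Q p := Finset.sum_nonneg fun i _ => sq_nonneg _
    have cs2 := cs.trans (mul_le_mul_of_nonneg_left (hgL _) hQ0)
    refine abs_le_of_sq_le_sq (cs2.trans ?_) (by positivity)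
    have : Q p ≤ ((Q p / κ + κ) / 2) ^ 2 := by
      have h : Q p = (Q p / κ) * κ := by field_simp
      nlinarith [sq_nonneg (Q p / κ - κ)]
    calc Q p * L ^ 2 ≤ ((Q p / κ + κ) / 2) ^ 2 * L ^ 2 := by gcongr
      _ = _ := by ring
  rw [← Real.norm_eq_abs]
  refine (norm_integral_le_of_norm_le (((hQi.div_const κ).add (integrable_const κ)).const_mul (L/2))
    (ae_of_all _ hpt)).trans ?_
  simp only [Pi.add_apply]
  rw [integral_const_mul, integral_add (hQi.div_const κ) (integrable_const κ), integral_div]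
  simp only [integral_const, probReal_univ, one_smul]
  have : (∫ p, Q p ∂(μ.prod (gpi d))) / κ ≤ κ := by
    rw [div_le_iff₀ hκ0]; nlinarith
  nlinarith

theorem smooth_bound {n d : ℕ} {μ : Measure (Matrix (Fin n) (Fin n) ℝ)} (hμ : IsHaarO n μ)
    (hn : 2 ≤ n) (hd : 0 < d) (C : Fin d → Matrix (Fin n) (Fin n) ℝ)
    (hC : ∀ i j, ∑ k, ∑ a, C i k a * C j k a = n * kd i j)
    {g : (Fin d → ℝ) → ℝ} (hg : ContDiff ℝ 2 g) {K : ℝ} (hK : ∀ x, |g x| ≤ K)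
    (hK' : ∀ j x, |pd g j x| ≤ K) (hK'' : ∀ i j x, |pd (pd g i) j x| ≤ K)
    {L : ℝ} (hL : 0 ≤ L) (hgL : ∀ x, ∑ i, pd g i x ^ 2 ≤ L ^ 2) :
    |∫ M, g (xL C M) ∂μ - ∫ z, g z ∂(gpi d)| ≤ L * (Real.sqrt 2 * d) / (n - 1) := by
  have := hμ.1
  have hn' : (2:ℝ) ≤ n := by exact_mod_cast hn
  set κ : ℝ := L * (Real.sqrt 2 * d) / (n - 1) with hκ
  set Ψ : ℝ → ℝ := fun θ => ∫ p, g (Real.cos θ • xL C p.1 + Real.sin θ • p.2) ∂(μ.prod (gpi d))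
    with hΨ
  set Ψ' : ℝ → ℝ := fun θ => ∫ p, ∑ i, (-Real.sin θ * xL C p.1 i + Real.cos θ * p.2 i) *
        pd g i (Real.cos θ • xL C p.1 + Real.sin θ • p.2) ∂(μ.prod (gpi d)) with hΨ'
  have hder : ∀ θ, HasDerivAt Ψ (Ψ' θ) θ := psi_hasDeriv hμ C hg hK hK'
  have hbd : ∀ θ, |Ψ' θ| ≤ |Real.cos θ| * κ := by
    intro θ
    have h1 := psi_formula hμ C hC hg hK' hK'' (Real.cos θ) (Real.sin θ)
    have h2 := psi_bound hμ hn hd C hC hL hgL (Real.cos θ) (Real.sin θ)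
    have h3 : ((n:ℝ) - 1) * |Ψ' θ| ≤ |Real.cos θ| * (L * (Real.sqrt 2 * d)) := by
      rw [← abs_of_pos (by linarith : (0:ℝ) < n - 1), ← abs_mul, h1, abs_mul, abs_neg]
      gcongr
    rw [hκ, mul_div_assoc', le_div_iff₀ (by linarith)]
    linarith
  have hcos : ∀ θ ∈ interior (Set.Icc 0 (Real.pi / 2)), |Real.cos θ| = Real.cos θ := by
    intro θ hθ
    rw [interior_Icc] at hθ
    exact abs_of_nonneg (Real.cos_nonneg_of_mem_Icc ⟨by linarith [hθ.1, Real.pi_pos], hθ.2.le⟩)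
  have hmono : ∀ e : ℝ, |e| = 1 → 0 + e * Ψ 0 ≤ κ + e * Ψ (Real.pi / 2) := by
    intro e he
    have hd1 : ∀ θ, HasDerivAt (fun θ => κ * Real.sin θ + e * Ψ θ)
        (κ * Real.cos θ + e * Ψ' θ) θ := fun θ =>
      ((Real.hasDerivAt_sin θ).const_mul κ).add ((hder θ).const_mul e)
    have := monotoneOn_of_deriv_nonneg (D := Set.Icc 0 (Real.pi / 2)) (convex_Icc _ _)
      (f := fun θ => κ * Real.sin θ + e * Ψ θ)
      (fun θ _ => (hd1 θ).continuousAt.continuousWithinAt)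
      (fun θ _ => (hd1 θ).differentiableAt.differentiableWithinAt) (by
        intro θ hθ
        rw [(hd1 θ).deriv]
        have h1 := hbd θ
        rw [hcos θ hθ] at h1
        have h2 : |e * Ψ' θ| ≤ Real.cos θ * κ := by rw [abs_mul, he, one_mul]; exact h1
        have := neg_abs_le (e * Ψ' θ)
        linarith)
    have h := this (a := 0) (b := Real.pi / 2) ⟨le_rfl, by positivity⟩ ⟨by positivity, le_rfl⟩
      (by positivity)
    simpa using h
  have h0 : Ψ 0 = ∫ M, g (xL C M) ∂μ := by
    simp only [hΨ, Real.cos_zero, Real.sin_zero, one_smul, zero_smul, add_zero]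
    rw [integral_fun_fst (fun M => g (xL C M))]
    simp
  have h1 : Ψ (Real.pi / 2) = ∫ z, g z ∂(gpi d) := by
    simp only [hΨ, Real.cos_pi_div_two, Real.sin_pi_div_two, one_smul, zero_smul, zero_add]
    rw [integral_fun_snd (fun z => g z)]
    simp
  rw [← h0, ← h1, abs_le]
  have a := hmono 1 (by simp)
  have b := hmono (-1) (by simp)
  constructor <;> linarith

end PsiPart

section ApproxPart

/-- Euclidean length -/
noncomputable def en {d : ℕ} (x : Fin d → ℝ) : ℝ := Real.sqrt (∑ i, x i ^ 2)

/-- Euclidean Lipschitz -/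
def LipE {d : ℕ} (L : ℝ) (g : (Fin d → ℝ) → ℝ) : Prop := ∀ x y, |g x - g y| ≤ L * en (x - y)

theorem en_nonneg {d : ℕ} (x : Fin d → ℝ) : 0 ≤ en x := Real.sqrt_nonneg _

theorem en_eq {d : ℕ} (x : Fin d → ℝ) : en x = ‖(WithLp.toLp 2 x : EuclideanSpace ℝ (Fin d))‖ := by
  rw [EuclideanSpace.norm_eq]
  simp [en]

theorem en_cont {d : ℕ} : Continuous (en : (Fin d → ℝ) → ℝ) := by
  unfold en; fun_prop

theorem en_le {d : ℕ} (x : Fin d → ℝ) : en x ≤ Real.sqrt d * ‖x‖ := by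
  unfold en
  rw [← Real.sqrt_sq (norm_nonneg x), ← Real.sqrt_mul (by positivity)]
  refine Real.sqrt_le_sqrt ?_
  refine (Finset.sum_le_card_nsmul Finset.univ _ (‖x‖ ^ 2) fun i _ => ?_).trans (by simp)
  rw [← sq_abs]
  exact pow_le_pow_left₀ (abs_nonneg _) (norm_le_pi_norm x i) 2

theorem norm_le_en {d : ℕ} (x : Fin d → ℝ) : ‖x‖ ≤ en x := by
  rw [pi_norm_le_iff_of_nonneg (en_nonneg x)]
  intro i
  refine Real.le_sqrt_of_sq_le ?_
  rw [Real.norm_eq_abs, sq_abs]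
  exact Finset.single_le_sum (f := fun i => x i ^ 2) (fun i _ => sq_nonneg _) (Finset.mem_univ i)

theorem en_le_sum {d : ℕ} (x : Fin d → ℝ) : en x ≤ ∑ i, |x i| := by
  refine Real.sqrt_le_iff.2 ⟨Finset.sum_nonneg fun i _ => abs_nonneg _, ?_⟩
  have := Finset.sum_sq_le_sq_sum_of_nonneg (s := Finset.univ) (f := fun i => |x i|)
    (fun i _ => abs_nonneg _)
  simpa using this

theorem en_smul {d : ℕ} (r : ℝ) (x : Fin d → ℝ) : en (r • x) = |r| * en x := by
  rw [en_eq, en_eq, WithLp.toLp_smul, norm_smul, Real.norm_eq_abs]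

theorem LipE.lipschitz {d : ℕ} {L : ℝ} (hL : 0 ≤ L) {g : (Fin d → ℝ) → ℝ} (h : LipE L g) :
    LipschitzWith (Real.toNNReal (L * Real.sqrt d)) g := by
  refine LipschitzWith.of_dist_le_mul fun x y => ?_
  rw [Real.dist_eq, dist_eq_norm, Real.coe_toNNReal _ (by positivity), mul_assoc]
  exact (h x y).trans (mul_le_mul_of_nonneg_left (en_le _) hL)

theorem LipE.pd_sq {d : ℕ} {L : ℝ} (hL : 0 ≤ L) {g : (Fin d → ℝ) → ℝ} (h : LipE L g)
    (hg : Differentiable ℝ g) (x : Fin d → ℝ) : ∑ i, pd g i x ^ 2 ≤ L ^ 2 := by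
  set v : Fin d → ℝ := fun i => pd g i x with hv
  have hd : HasDerivAt (fun t : ℝ => g (x + t • v)) (fderiv ℝ g x v) 0 := by
    have h1 : HasDerivAt (fun t : ℝ => x + t • v) v 0 := by
      simpa using ((hasDerivAt_id' (0:ℝ)).smul_const v).const_add x
    have h2 : HasFDerivAt g (fderiv ℝ g x) (x + (0:ℝ) • v) := by
      simpa using (hg x).hasFDerivAt
    exact h2.comp_hasDerivAt 0 h1
  have hlip : LipschitzWith (Real.toNNReal (L * en v)) (fun t : ℝ => g (x + t • v)) := by
    refine LipschitzWith.of_dist_le_mul fun s t => ?_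
    rw [Real.dist_eq, Real.dist_eq, Real.coe_toNNReal _ (mul_nonneg hL (en_nonneg _))]
    refine (h _ _).trans (le_of_eq ?_)
    rw [add_sub_add_left_eq_sub, ← sub_smul, en_smul]; ring
  have hb := norm_deriv_le_of_lipschitz (x₀ := 0) hlip
  rw [hd.deriv, fderiv_eq_pd, Real.coe_toNNReal _ (mul_nonneg hL (en_nonneg _))] at hb
  have hS : ∑ i, v i * pd g i x = en v ^ 2 := by
    rw [en, Real.sq_sqrt (Finset.sum_nonneg fun i _ => sq_nonneg _)]
    exact Finset.sum_congr rfl fun i _ => (sq _).symm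
  have hS2 : ∑ i, pd g i x ^ 2 = en v ^ 2 := by
    rw [← hS]; exact Finset.sum_congr rfl fun i _ => (sq _)
  rw [hS, Real.norm_eq_abs, abs_of_nonneg (sq_nonneg _)] at hb
  rw [hS2]
  have := en_nonneg v
  nlinarith [sq_nonneg (en v - L)]

theorem cs_smooth_bound {n d : ℕ} {μ : Measure (Matrix (Fin n) (Fin n) ℝ)} (hμ : IsHaarO n μ)
    (hn : 2 ≤ n) (hd : 0 < d) (C : Fin d → Matrix (Fin n) (Fin n) ℝ)
    (hC : ∀ i j, ∑ k, ∑ a, C i k a * C j k a = n * kd i j)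
    {g : (Fin d → ℝ) → ℝ} (hg : ContDiff ℝ 2 g) (hs : HasCompactSupport g)
    {L : ℝ} (hL : 0 ≤ L) (hgL : LipE L g) :
    |∫ M, g (xL C M) ∂μ - ∫ z, g z ∂(gpi d)| ≤ L * (Real.sqrt 2 * d) / (n - 1) := by
  have hg1 : ContDiff ℝ 1 g := hg.of_le (by norm_num)
  have hs1 : ∀ i, HasCompactSupport (pd g i) := fun i => hs.fderiv_apply (𝕜 := ℝ) _
  have hs2 : ∀ i j, HasCompactSupport (pd (pd g i) j) := fun i j => (hs1 i).fderiv_apply (𝕜 := ℝ) _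
  obtain ⟨K0, h0⟩ := hs.exists_bound_of_continuous hg.continuous
  choose K1 h1 using fun i => (hs1 i).exists_bound_of_continuous (pd_cont hg1 i)
  choose K2 h2 using fun i j => (hs2 i j).exists_bound_of_continuous (pd_cont (pd_contDiff hg i) j)
  have hK1 : ∀ i, 0 ≤ K1 i := fun i => (norm_nonneg _).trans (h1 i 0)
  have hK2 : ∀ i j, 0 ≤ K2 i j := fun i j => (norm_nonneg _).trans (h2 i j 0)
  have hK0 : 0 ≤ K0 := (norm_nonneg _).trans (h0 0)
  have hS1 : 0 ≤ ∑ i, K1 i := Finset.sum_nonneg fun i _ => hK1 i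
  have hS2 : 0 ≤ ∑ i, ∑ j, K2 i j := Finset.sum_nonneg fun i _ => Finset.sum_nonneg fun j _ => hK2 i j
  refine smooth_bound hμ hn hd C hC hg (K := K0 + ∑ i, K1 i + ∑ i, ∑ j, K2 i j) ?_ ?_ ?_ hL
    (hgL.pd_sq hL (hg1.differentiable one_ne_zero))
  · intro x
    have := h0 x
    rw [Real.norm_eq_abs] at this
    linarith
  · intro j x
    have := h1 j x
    rw [Real.norm_eq_abs] at this
    have h := Finset.single_le_sum (f := K1) (fun i _ => hK1 i) (Finset.mem_univ j)
    linarith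
  · intro i j x
    have := h2 i j x
    rw [Real.norm_eq_abs] at this
    have h := Finset.single_le_sum (f := K2 i) (fun j _ => hK2 i j) (Finset.mem_univ j)
    have h' := Finset.single_le_sum (f := fun i => ∑ j, K2 i j)
      (fun i _ => Finset.sum_nonneg fun j _ => hK2 i j) (Finset.mem_univ i)
    linarith

open scoped Convolution in
theorem mollify {d : ℕ} {g : (Fin d → ℝ) → ℝ} (hs : HasCompactSupport g)
    {L : ℝ} (hL : 0 ≤ L) (hgL : LipE L g) {ε : ℝ} (hε : 0 < ε) :
    ∃ h : (Fin d → ℝ) → ℝ, ContDiff ℝ 2 h ∧ HasCompactSupport h ∧ LipE L h ∧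
      ∀ x, |h x - g x| ≤ ε := by
  have hlip := hgL.lipschitz hL
  have hgc := hlip.continuous
  set r : ℝ := ε / (L * Real.sqrt d + 1) with hr
  have hr0 : 0 < r := by positivity
  let φ : ContDiffBump (0 : Fin d → ℝ) := ⟨r / 2, r, by positivity, by linarith⟩
  have hφc : Continuous (φ.normed (volume : Measure (Fin d → ℝ))) := φ.continuous_normed
  refine ⟨φ.normed volume ⋆[ContinuousLinearMap.lsmul ℝ ℝ, volume] g, ?_, ?_, ?_, ?_⟩
  · exact φ.hasCompactSupport_normed.contDiff_convolution_left _ φ.contDiff_normed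
      hgc.locallyIntegrable
  · exact φ.hasCompactSupport_normed.convolution _ hs
  · intro x y
    have hi : ∀ x, Integrable (fun t : Fin d → ℝ => φ.normed volume t * g (x - t)) := fun x =>
      Continuous.integrable_of_hasCompactSupport (by fun_prop) φ.hasCompactSupport_normed.mul_right
    simp only [convolution_def, ContinuousLinearMap.lsmul_apply, smul_eq_mul]
    rw [← integral_sub (hi x) (hi y), ← Real.norm_eq_abs]
    refine (norm_integral_le_of_norm_le (g := fun t => φ.normed volume t * (L * en (x - y)))
      (φ.integrable_normed.mul_const _) (ae_of_all _ fun t => ?_)).trans ?_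
    · rw [← mul_sub, Real.norm_eq_abs, abs_mul, abs_of_nonneg (φ.nonneg_normed t)]
      refine mul_le_mul_of_nonneg_left ((hgL _ _).trans (le_of_eq ?_)) (φ.nonneg_normed t)
      congr 2; abel
    · rw [integral_mul_const, φ.integral_normed, one_mul]
  · intro x
    rw [← Real.dist_eq]
    refine φ.dist_normed_convolution_le hgc.aestronglyMeasurable fun y hy => ?_
    refine (hlip.dist_le_mul y x).trans ?_
    have hy' : dist y x ≤ r := (Metric.mem_ball.1 hy).le
    rw [Real.coe_toNNReal _ (by positivity)]
    calc L * Real.sqrt d * dist y x ≤ (L * Real.sqrt d + 1) * r := by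
          gcongr; linarith
      _ = ε := by rw [hr]; field_simp

theorem cs_bound {n d : ℕ} {μ : Measure (Matrix (Fin n) (Fin n) ℝ)} (hμ : IsHaarO n μ)
    (hn : 2 ≤ n) (hd : 0 < d) (C : Fin d → Matrix (Fin n) (Fin n) ℝ)
    (hC : ∀ i j, ∑ k, ∑ a, C i k a * C j k a = n * kd i j)
    {g : (Fin d → ℝ) → ℝ} (hs : HasCompactSupport g)
    {L : ℝ} (hL : 0 ≤ L) (hgL : LipE L g) :
    |∫ M, g (xL C M) ∂μ - ∫ z, g z ∂(gpi d)| ≤ L * (Real.sqrt 2 * d) / (n - 1) := by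
  have := hμ.1
  refine le_of_forall_pos_le_add fun ε hε => ?_
  obtain ⟨h, h2, hcs, hl, happ⟩ := mollify hs hL hgL (ε := ε / 2) (by positivity)
  have hx := xL_cont C
  have hgc := (hgL.lipschitz hL).continuous
  have hb := cs_smooth_bound hμ hn hd C hC h2 hcs hL hl
  have hhc := h2.continuous
  have e : ∀ {α : Type} [MeasurableSpace α] (ν : Measure α) [IsProbabilityMeasure ν] (f k : α → ℝ),
      Integrable f ν → Integrable k ν → (∀ a, |f a - k a| ≤ ε / 2) →
      |∫ a, f a ∂ν - ∫ a, k a ∂ν| ≤ ε / 2 := by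
    intro α _ ν _ f k hf hk hfk
    rw [← integral_sub hf hk, ← Real.norm_eq_abs]
    simpa using norm_integral_le_of_norm_le_const (μ := ν) (f := fun a => f a - k a) (C := ε / 2)
      (ae_of_all _ fun a => by rw [Real.norm_eq_abs]; exact hfk a)
  have e1 := e μ (fun M => h (xL C M)) (fun M => g (xL C M)) (haar_integrable hμ (by fun_prop))
    (haar_integrable hμ (by fun_prop)) (fun M => happ _)
  obtain ⟨K0, h0⟩ := hs.exists_bound_of_continuous hgc
  obtain ⟨K1, h1⟩ := hcs.exists_bound_of_continuous hhc
  have e2 := e (gpi d) h g (Integrable.of_bound hhc.aestronglyMeasurable K1 (ae_of_all _ h1))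
    (Integrable.of_bound hgc.aestronglyMeasurable K0 (ae_of_all _ h0)) happ
  rw [abs_le] at e1 e2 hb ⊢
  constructor <;> linarith [e1.1, e1.2, e2.1, e2.2, hb.1, hb.2]

theorem LipE.max {d : ℕ} {L : ℝ} {g h : (Fin d → ℝ) → ℝ} (hg : LipE L g) (hh : LipE L h) :
    LipE L (fun x => max (g x) (h x)) := fun x y =>
  (abs_max_sub_max_le_max _ _ _ _).trans (max_le (hg x y) (hh x y))

theorem LipE.min {d : ℕ} {L : ℝ} {g h : (Fin d → ℝ) → ℝ} (hg : LipE L g) (hh : LipE L h) :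
    LipE L (fun x => min (g x) (h x)) := fun x y =>
  (abs_min_sub_min_le_max _ _ _ _).trans (max_le (hg x y) (hh x y))

theorem LipE.neg {d : ℕ} {L : ℝ} {g : (Fin d → ℝ) → ℝ} (hg : LipE L g) :
    LipE L (fun x => - g x) := fun x y => by
  rw [← abs_neg]
  refine le_trans (le_of_eq ?_) (hg x y)
  congr 1; ring

theorem LipE_tent {d : ℕ} {L : ℝ} (hL : 0 ≤ L) (R : ℝ) :
    LipE L (fun x : Fin d → ℝ => max (L * (R - en x)) 0) := by
  refine LipE.max (fun x y => ?_) (fun x y => ?_)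
  · rw [← mul_sub, abs_mul, abs_of_nonneg hL]
    refine mul_le_mul_of_nonneg_left ?_ hL
    rw [sub_sub_sub_cancel_left, abs_sub_comm, en_eq, en_eq, en_eq, WithLp.toLp_sub]
    exact abs_norm_sub_norm_le _ _
  · simpa using mul_nonneg hL (en_nonneg _)

theorem lip_bound {n d : ℕ} {μ : Measure (Matrix (Fin n) (Fin n) ℝ)} (hμ : IsHaarO n μ)
    (hn : 2 ≤ n) (hd : 0 < d) (C : Fin d → Matrix (Fin n) (Fin n) ℝ)
    (hC : ∀ i j, ∑ k, ∑ a, C i k a * C j k a = n * kd i j)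
    {g : (Fin d → ℝ) → ℝ} {L : ℝ} (hL : 0 ≤ L) (hgL : LipE L g) (hg0 : g 0 = 0) :
    |∫ M, g (xL C M) ∂μ - ∫ z, g z ∂(gpi d)| ≤ L * (Real.sqrt 2 * d) / (n - 1) := by
  have := hμ.1
  set T : ℕ → (Fin d → ℝ) → ℝ := fun m x => max (L * (m - en x)) 0 with hT
  set G : ℕ → (Fin d → ℝ) → ℝ := fun m x => max (min (g x) (T m x)) (-(T m x)) with hG
  have hx := xL_cont C
  have hgx : ∀ x, |g x| ≤ L * en x := fun x => by simpa [hg0] using hgL x 0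
  have hTL : ∀ m, LipE L (T m) := fun m => LipE_tent hL m
  have hGL : ∀ m, LipE L (G m) := fun m => (hgL.min (hTL m)).max (hTL m).neg
  have hGc : ∀ m, Continuous (G m) := fun m => ((hGL m).lipschitz hL).continuous
  have hT0 : ∀ m x, 0 ≤ T m x := fun m x => le_max_right _ _
  have hGs : ∀ m, HasCompactSupport (G m) := fun m => by
    refine HasCompactSupport.intro (isCompact_closedBall (0 : Fin d → ℝ) m) fun x hx => ?_
    have h1 : (m:ℝ) < ‖x‖ := by simpa using hx
    have h2 : T m x = 0 := by
      refine max_eq_right ?_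
      have := norm_le_en x
      exact mul_nonpos_of_nonneg_of_nonpos hL (by linarith)
    simp [hG, h2]
  have hGb : ∀ m x, |G m x| ≤ L * ∑ i, |x i| := fun m x => by
    have h1 : |G m x| ≤ |g x| := by
      have := hT0 m x
      simp only [hG]
      rw [abs_le]
      constructor
      · rcases le_total (g x) (T m x) with h | h
        · rw [min_eq_left h]; exact (neg_abs_le _).trans (le_max_left _ _)
        · rw [min_eq_right h]
          exact ((neg_nonpos.2 (abs_nonneg _)).trans this).trans (le_max_left _ _)
      · refine max_le ((min_le_left _ _).trans (le_abs_self _)) ?_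
        linarith [abs_nonneg (g x)]
    exact h1.trans ((hgx x).trans (mul_le_mul_of_nonneg_left (en_le_sum x) hL))
  have hGt : ∀ x, Filter.Tendsto (fun m => G m x) Filter.atTop (nhds (g x)) := fun x => by
    refine tendsto_const_nhds.congr' ?_
    obtain ⟨m0, hm0⟩ := exists_nat_ge (2 * en x)
    filter_upwards [Filter.eventually_ge_atTop m0] with m hm
    have hm' : (m0:ℝ) ≤ m := by exact_mod_cast hm
    have h1 : L * en x ≤ T m x := by
      refine le_trans ?_ (le_max_left _ _)
      exact mul_le_mul_of_nonneg_left (by linarith) hL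
    have h2 := abs_le.1 ((hgx x).trans h1)
    simp only [hG]
    rw [min_eq_left h2.2, max_eq_left h2.1]
  have t1 : Filter.Tendsto (fun m => ∫ M, G m (xL C M) ∂μ) Filter.atTop
      (nhds (∫ M, g (xL C M) ∂μ)) := by
    refine tendsto_integral_of_dominated_convergence (fun M => L * ∑ i, |xL C M i|) ?_ ?_ ?_ ?_
    · exact fun m => ((hGc m).comp hx).measurable.aestronglyMeasurable
    · exact haar_integrable hμ (by fun_prop)
    · exact fun m => ae_of_all _ fun M => hGb m _
    · exact ae_of_all _ fun M => hGt _
  have t2 : Filter.Tendsto (fun m => ∫ z, G m z ∂(gpi d)) Filter.atTop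
      (nhds (∫ z, g z ∂(gpi d))) := by
    refine tendsto_integral_of_dominated_convergence (fun z => L * ∑ i, |z i|) ?_ ?_ ?_ ?_
    · exact fun m => (hGc m).aestronglyMeasurable
    · exact (integrable_finsetSum _ fun i _ =>
        ((gpi_memLp i).integrable (by norm_num)).abs).const_mul L
    · exact fun m => ae_of_all _ fun M => hGb m _
    · exact ae_of_all _ fun M => hGt _
  exact le_of_tendsto (t1.sub t2).abs (Filter.Eventually.of_forall fun m =>
    cs_bound hμ hn hd C hC (hGs m) hL (hGL m))

theorem lip_bound' {n d : ℕ} {μ : Measure (Matrix (Fin n) (Fin n) ℝ)} (hμ : IsHaarO n μ)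
    (hn : 2 ≤ n) (hd : 0 < d) (C : Fin d → Matrix (Fin n) (Fin n) ℝ)
    (hC : ∀ i j, ∑ k, ∑ a, C i k a * C j k a = n * kd i j)
    {g : (Fin d → ℝ) → ℝ} {L : ℝ} (hL : 0 ≤ L) (hgL : LipE L g) :
    |∫ M, g (xL C M) ∂μ - ∫ z, g z ∂(gpi d)| ≤ L * (Real.sqrt 2 * d) / (n - 1) := by
  have := hμ.1
  have hx := xL_cont C
  have hgc := (hgL.lipschitz hL).continuous
  have h := lip_bound hμ hn hd C hC (g := fun x => g x - g 0) hL
    (fun x y => by simpa using hgL x y) (by simp)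
  have i2 : Integrable g (gpi d) := by
    refine Integrable.mono' (g := fun z => |g 0| + L * ∑ i, |z i|) ?_ hgc.aestronglyMeasurable
      (ae_of_all _ fun z => ?_)
    · exact (integrable_const _).add ((integrable_finsetSum _ fun i _ =>
        ((gpi_memLp i).integrable (by norm_num)).abs).const_mul L)
    · have h1 := (hgL z 0).trans (mul_le_mul_of_nonneg_left (en_le_sum (z - 0)) hL)
      simp only [sub_zero] at h1
      have h2 := abs_add_le (g 0) (g z - g 0)
      rw [add_sub_cancel] at h2
      rw [Real.norm_eq_abs]
      linarith
  rw [integral_sub (haar_integrable hμ (by fun_prop)) (integrable_const _),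
    integral_sub i2 (integrable_const _)] at h
  simpa using h

end ApproxPart

section FinalPart

theorem charFun_toLp {d : ℕ} (ν : Measure (Fin d → ℝ)) (t : EuclideanSpace ℝ (Fin d)) :
    charFun (ν.map (WithLp.toLp 2)) t = charFun (ν.map (fun y => ∑ i, t i * y i)) 1 := by
  rw [charFun_apply, charFun_apply, integral_map (Measurable.aemeasurable (by fun_prop))
    (Measurable.aestronglyMeasurable (by fun_prop)),
    integral_map (Measurable.aemeasurable (by fun_prop))
    (Measurable.aestronglyMeasurable (by fun_prop))]
  simp [PiLp.inner_apply]

theorem ext_of_toLp {d : ℕ} {ν ρ : Measure (Fin d → ℝ)} [IsProbabilityMeasure ν]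
    [IsProbabilityMeasure ρ]
    (h : ∀ t : EuclideanSpace ℝ (Fin d),
      charFun (ν.map (WithLp.toLp 2)) t = charFun (ρ.map (WithLp.toLp 2)) t) : ν = ρ := by
  have h1 : ν.map (MeasurableEquiv.toLp 2 (Fin d → ℝ)) = ρ.map (MeasurableEquiv.toLp 2 (Fin d → ℝ)) := by
    rw [MeasurableEquiv.coe_toLp]
    apply Measure.ext_of_charFun (E := EuclideanSpace ℝ (Fin d))
    ext t
    exact h t
  have h2 := congrArg (fun m => m.map (MeasurableEquiv.toLp 2 (Fin d → ℝ)).symm) h1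
  simpa [MeasurableEquiv.map_symm_map] using h2

theorem gauss_eq {d : ℕ} {A S : Matrix (Fin d) (Fin d) ℝ} (hAS : A = S * Sᵀ)
    {γ : Measure (Fin d → ℝ)} (hγ : IsGaussianLaw A γ) :
    γ = (gpi d).map (fun z => S *ᵥ z) := by
  have := hγ.1
  have hm : Measurable (fun z : Fin d → ℝ => S *ᵥ z) := by
    have : Continuous (fun z : Fin d → ℝ => S *ᵥ z) := by fun_prop
    exact this.measurable
  have : IsProbabilityMeasure ((gpi d).map (fun z => S *ᵥ z)) :=
    Measure.isProbabilityMeasure_map hm.aemeasurable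
  apply ext_of_toLp
  intro t
  have hq : ∑ i, ∑ j, t i * A i j * t j = ∑ k, (∑ i, t i * S i k) ^ 2 := by
    subst hAS
    simp only [Matrix.mul_apply, Matrix.transpose_apply, Finset.mul_sum, Finset.sum_mul, sq]
    rw [Finset.sum_comm' (t' := Finset.univ) (s' := fun _ => Finset.univ) (by simp)]
    rw [Finset.sum_comm]
    conv_lhs => enter [2, i]; rw [Finset.sum_comm]
    rw [Finset.sum_comm]
    refine Finset.sum_congr rfl fun k _ => ?_
    refine Finset.sum_congr rfl fun i _ => Finset.sum_congr rfl fun j _ => ?_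
    ring
  have h1 : charFun (γ.map (WithLp.toLp 2)) t
      = Complex.exp (-((∑ k, (∑ i, t i * S i k) ^ 2 : ℝ) : ℂ) / 2) := by
    rw [charFun_toLp, hγ.2 t, charFun_gaussianReal, hq]
    rw [Real.coe_toNNReal _ (by positivity)]
    congr 1
    push_cast
    ring
  have h2 : charFun (((gpi d).map (fun z => S *ᵥ z)).map (WithLp.toLp 2)) t
      = charFun ((gpi d).map (WithLp.toLp 2)) (WithLp.toLp 2 (fun k => ∑ i, t i * S i k)) := by
    rw [charFun_toLp, charFun_toLp, Measure.map_map (by fun_prop) hm]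
    congr 2
    ext z
    simp only [Function.comp, Matrix.mulVec, dotProduct, Finset.mul_sum, Finset.sum_mul]
    rw [Finset.sum_comm]
    simp only [mul_assoc]
  rw [h1, h2, gpi, map_pi_eq_stdGaussian, charFun_stdGaussian]
  congr 3
  rw [← Complex.ofReal_pow, EuclideanSpace.real_norm_sq_eq]

theorem en_mulVec_le {d : ℕ} {A S : Matrix (Fin d) (Fin d) ℝ} (hAS : A = S * Sᵀ)
    (x : Fin d → ℝ) : en (S *ᵥ x) ≤ Real.sqrt (opNorm A) * en x := by
  have h1 : opNorm A = ‖Matrix.toEuclideanCLM (𝕜 := ℝ) S‖ ^ 2 := by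
    rw [opNorm, hAS, map_mul]
    have : Sᵀ = star S := by
      rw [Matrix.star_eq_conjTranspose, Matrix.conjTranspose_eq_transpose_of_trivial]
    rw [this, map_star, sq]
    exact CStarRing.norm_self_mul_star (x := Matrix.toEuclideanCLM (𝕜 := ℝ) S)
  rw [h1, Real.sqrt_sq (norm_nonneg _), en_eq, en_eq]
  have := (Matrix.toEuclideanCLM (𝕜 := ℝ) S).le_opNorm (WithLp.toLp 2 x)
  simpa using this

theorem exists_frame {n d : ℕ} (hn : 0 < n) (B : Fin d → Matrix (Fin n) (Fin n) ℝ)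
    (hB : LinearIndependent ℝ B) :
    ∃ (C : Fin d → Matrix (Fin n) (Fin n) ℝ) (S : Matrix (Fin d) (Fin d) ℝ),
      (∀ i j, ∑ k, ∑ a, C i k a * C j k a = n * kd i j) ∧
      ∀ i k a, B i k a = ∑ j, S i j * C j k a := by
  let φ : Matrix (Fin n) (Fin n) ℝ →ₗ[ℝ] EuclideanSpace ℝ (Fin n × Fin n) :=
    { toFun := fun M => WithLp.toLp 2 (fun p => M p.1 p.2)
      map_add' := fun M N => by ext p; simp
      map_smul' := fun r M => by ext p; simp }
  have hφ : Function.Injective φ := by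
    intro M N h
    ext i j
    have := congrArg (fun v : EuclideanSpace ℝ (Fin n × Fin n) => v (i, j)) h
    simpa [φ] using this
  have hv : LinearIndependent ℝ (φ ∘ B) := hB.map_injOn φ hφ.injOn
  let W := Submodule.span ℝ (Set.range (φ ∘ B))
  have hf : Module.finrank ℝ W = d := by
    simpa using finrank_span_eq_card hv
  let b := (stdOrthonormalBasis ℝ W).reindex (finCongr hf)
  have hw : ∀ i, φ (B i) ∈ W := fun i => Submodule.subset_span ⟨i, rfl⟩
  have hs : Real.sqrt n ≠ 0 := by positivity
  refine ⟨fun j k a => Real.sqrt n * (b j : EuclideanSpace ℝ (Fin n × Fin n)) (k, a),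
    fun i j => inner ℝ (b j) (⟨φ (B i), hw i⟩ : W) / Real.sqrt n, ?_, ?_⟩
  · intro i j
    have := orthonormal_iff_ite.1 b.orthonormal i j
    rw [Submodule.coe_inner, PiLp.inner_apply, Fintype.sum_prod_type] at this
    rw [kd, ← this, Finset.mul_sum]
    refine Finset.sum_congr rfl fun k _ => ?_
    rw [Finset.mul_sum]
    refine Finset.sum_congr rfl fun a _ => ?_
    have h2 : Real.sqrt n * Real.sqrt n = n := Real.mul_self_sqrt (by positivity)
    simp only [RCLike.inner_apply, conj_trivial]
    linear_combination ((b i : EuclideanSpace ℝ (Fin n × Fin n)) (k, a)) * ((b j : EuclideanSpace ℝ (Fin n × Fin n)) (k, a)) * h2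
  · intro i k a
    have h := b.sum_repr' (⟨φ (B i), hw i⟩ : W)
    have h2 := congrArg (fun v : W => (v : EuclideanSpace ℝ (Fin n × Fin n)) (k, a)) h
    simp only [Submodule.coe_sum, Submodule.coe_smul, WithLp.ofLp_sum, Finset.sum_apply, PiLp.smul_apply, smul_eq_mul] at h2
    have h3 : (φ (B i)) (k, a) = B i k a := rfl
    rw [h3] at h2
    rw [← h2]
    refine Finset.sum_congr rfl fun j _ => ?_
    field_simp

end FinalPart

/-- **Theorem (Chatterjee–Meckes, adapted).** For linearly independent `B₁, …, B_d` with
`tr(BᵢBᵢᵀ) = n`, a Haar-distributed orthogonal `M`, `X = (tr(B₁M), …, tr(B_dM))`,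
`A_{ij} = tr(BᵢBⱼᵀ)/n` and `Y ∼ N(0, A)`, if `n ≥ 2` then for every `1`-Lipschitz
(w.r.t. the Euclidean norm) `g : ℝ^d → ℝ`,
`|E[g(X)] - E[g(Y)]| ≤ d √(2‖A‖) / (n-1)`. -/
theorem haar_trace_wasserstein (n d : ℕ) (hn : 2 ≤ n)
    (μ : Measure (Matrix (Fin n) (Fin n) ℝ)) (hμ : IsHaarO n μ)
    (B : Fin d → Matrix (Fin n) (Fin n) ℝ) (hB : LinearIndependent ℝ B)
    (htr : ∀ i, (B i * (B i)ᵀ).trace = (n : ℝ))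
    (A : Matrix (Fin d) (Fin d) ℝ)
    (hA : ∀ i j, A i j = (B i * (B j)ᵀ).trace / (n : ℝ))
    (γ : Measure (Fin d → ℝ)) (hγ : IsGaussianLaw A γ) :
    ∀ g : (Fin d → ℝ) → ℝ,
      (∀ x y : Fin d → ℝ, |g x - g y| ≤ Real.sqrt (∑ i, (x i - y i) ^ 2)) →
      |(∫ M, g (fun i => (B i * M).trace) ∂μ) - ∫ y, g y ∂γ| ≤
        (d : ℝ) * Real.sqrt (2 * opNorm A) / ((n : ℝ) - 1) := by
  intro g hg
  have := hμ.1
  have := hγ.1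
  rcases Nat.eq_zero_or_pos d with rfl | hd
  · have h0 : ∀ x, g x = g 0 := fun x => congrArg g (Subsingleton.elim _ _)
    simp [h0 (fun i => _)]
  have hn0 : (n : ℝ) ≠ 0 := by
    have : n ≠ 0 := by omega
    exact_mod_cast this
  obtain ⟨C, S, hC, hBS⟩ := exists_frame (by omega) B hB
  have hAS : A = S * Sᵀ := by
    ext i j
    rw [hA, div_eq_iff hn0, Matrix.mul_apply]
    simp only [Matrix.trace, Matrix.diag, Matrix.mul_apply, Matrix.transpose_apply, hBS,
      Finset.sum_mul_sum]
    have e : ∀ p q, ∑ k, ∑ a, S i p * C p k a * (S j q * C q k a)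
        = S i p * S j q * (n * kd p q) := by
      intro p q
      rw [← hC, Finset.mul_sum]
      refine Finset.sum_congr rfl fun k _ => ?_
      rw [Finset.mul_sum]
      refine Finset.sum_congr rfl fun a _ => ?_
      ring
    calc _ = ∑ p, ∑ q, ∑ k, ∑ a, S i p * C p k a * (S j q * C q k a) := by
          simp_rw [Finset.sum_comm (s := (Finset.univ : Finset (Fin n))) (t := (Finset.univ : Finset (Fin d)))]
      _ = _ := by
          simp only [e]
          simp [kd, Finset.sum_mul, mul_assoc]
  have hBx : ∀ M, (fun i => (B i * M).trace) = S *ᵥ (xL C M) := by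
    intro M
    ext i
    have : B i = ∑ j, S i j • C j := by
      ext k a
      simp [hBS, Matrix.sum_apply]
    rw [this, Finset.sum_mul, Matrix.trace_sum]
    simp [Matrix.mulVec, dotProduct, xL_apply]
  have hgL : LipE 1 g := fun x y => by
    simpa [en] using hg x y
  have hgc : Continuous g := (hgL.lipschitz zero_le_one).continuous
  have hL : LipE (Real.sqrt (opNorm A)) (fun z => g (S *ᵥ z)) := fun x y => by
    have h1 := hgL (S *ᵥ x) (S *ᵥ y)
    rw [one_mul, ← Matrix.mulVec_sub] at h1
    exact h1.trans (en_mulVec_le hAS _)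
  have h := lip_bound' hμ hn hd C hC (Real.sqrt_nonneg _) hL
  have hS : Continuous (fun z : Fin d → ℝ => S *ᵥ z) := by fun_prop
  rw [gauss_eq hAS hγ, integral_map hS.measurable.aemeasurable hgc.aestronglyMeasurable]
  simp only [hBx]
  refine h.trans (le_of_eq ?_)
  rw [Real.sqrt_mul (by norm_num)]
  ring
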